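/- arXiv:2101.00623 — 6 statements merged into one kernel-verified Lean document; each statement's English description precedes it below -/
import Mathlib

section
/- Let g ∈ C²([0,∞)) satisfy g'(0) = 0, g''(t) > 0 for t > 0, a₁t − a₂ ≤ g(t) ≤ a₃t + a₄ for all t ≥ 0 (with constants a₁, a₃ > 0, a₂, a₄ ≥ 0), and g''(t) ≤ a₅(1+t)^(−μ) for all t ≥ 0 with a₅ > 0 and an exponent μ ≥ 3. Put F(Z) := g(|Z|) for Z ∈ ℝ². Then every C² solution u : ℝ² → ℝ of the equation div[∇F(∇u)] = 0 on ℝ² is an affine function. -/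
/-- `u : ℝ² → ℝ` solves `div[∇F(∇u)] = 0` on `ℝ²`:
`∑_α ∂_α[(∂F/∂Z_α)(∇u(x))] = 0` for all `x`. -/
noncomputable def IsScalarEulerSolution (F : EuclideanSpace ℝ (Fin 2) → ℝ)
    (u : EuclideanSpace ℝ (Fin 2) → ℝ) : Prop :=
  ∀ x : EuclideanSpace ℝ (Fin 2),
    ∑ α : Fin 2,
      fderiv ℝ (fun y => gradient F (gradient u y) α) x (EuclideanSpace.single α 1) = 0

noncomputable section

open MeasureTheory Set Filter Topology

abbrev E2 := EuclideanSpace ℝ (Fin 2)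

/-- partial derivative -/
def pd (i : Fin 2) (f : E2 → ℝ) (x : E2) : ℝ := fderiv ℝ f x (EuclideanSpace.single i 1)

theorem pd_continuous {f : E2 → ℝ} (hf : ContDiff ℝ 1 f) (i : Fin 2) : Continuous (pd i f) := by
  have := hf.continuous_fderiv (by norm_num)
  unfold pd
  fun_prop

theorem pd_supp {f : E2 → ℝ} (hf : HasCompactSupport f) (i : Fin 2) : HasCompactSupport (pd i f) := by
  exact hf.fderiv_apply (𝕜 := ℝ) _

theorem ibp {f φ : E2 → ℝ} (hf : ContDiff ℝ 1 f) (hφ : ContDiff ℝ 1 φ) (hc : HasCompactSupport φ)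
    (i : Fin 2) : ∫ x, f x * pd i φ x = - ∫ x, pd i f x * φ x := by
  unfold pd
  have h1 := pd_continuous hf i
  have h2 := pd_continuous hφ i
  have h3 := pd_supp hc i
  unfold pd at h1 h2 h3
  apply integral_mul_fderiv_eq_neg_fderiv_mul_of_integrable
  · exact (h1.mul hφ.continuous).integrable_of_hasCompactSupport hc.mul_left
  · exact (hf.continuous.mul h2).integrable_of_hasCompactSupport h3.mul_left
  · exact (hf.continuous.mul hφ.continuous).integrable_of_hasCompactSupport hc.mul_left
  · intro x _; exact hf.differentiable (by norm_num) x
  · intro x _; exact hφ.differentiable (by norm_num) x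

/-- differentiation of a translated integral -/
theorem transl {f h : E2 → ℝ} (hf : ContDiff ℝ 1 f) (hh : Continuous h) (hc : HasCompactSupport h)
    (k : Fin 2) : HasDerivAt (fun s : ℝ => ∫ x, f (x + s • EuclideanSpace.single k (1:ℝ)) * h x)
      (∫ x, pd k f x * h x) 0 := by
  set e : E2 := EuclideanSpace.single k (1:ℝ) with he
  have hpc := pd_continuous hf k
  obtain ⟨C, hC⟩ : ∃ C, ∀ y ∈ (fun q : E2 × ℝ => q.1 + q.2 • e) '' (tsupport h ×ˢ Icc (-1) 1),
      ‖pd k f y‖ ≤ C := by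
    apply IsCompact.exists_bound_of_continuousOn
    · exact (hc.isCompact.prod isCompact_Icc).image (by fun_prop)
    · exact hpc.continuousOn
  have key := (hasDerivAt_integral_of_dominated_loc_of_deriv_le (μ := volume) (𝕜 := ℝ)
    (F := fun s x => f (x + s • e) * h x) (F' := fun s x => pd k f (x + s • e) * h x)
    (x₀ := 0) (s := Icc (-1) 1) (bound := fun x => C * ‖h x‖)
    (Icc_mem_nhds (by norm_num) (by norm_num)) ?_ ?_ ?_ ?_ ?_ ?_).2
  · simpa using key
  · refine Eventually.of_forall fun s => ?_
    exact ((hf.continuous.comp (by fun_prop)).mul hh).aestronglyMeasurable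
  · simp only [zero_smul, add_zero]
    exact (hf.continuous.mul hh).integrable_of_hasCompactSupport hc.mul_left
  · simp only [zero_smul, add_zero]
    exact (hpc.mul hh).aestronglyMeasurable
  · refine Eventually.of_forall fun x s hs => ?_
    rw [norm_mul]
    by_cases hx : x ∈ tsupport h
    · exact mul_le_mul_of_nonneg_right (hC _ ⟨(x, s), ⟨hx, hs⟩, rfl⟩) (norm_nonneg _)
    · simp [image_eq_zero_of_notMem_tsupport hx]
  · exact ((hh.integrable_of_hasCompactSupport hc).norm).const_mul C
  · refine Eventually.of_forall fun x s hs => ?_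
    apply HasDerivAt.mul_const
    have h1 : HasFDerivAt f (fderiv ℝ f (x + s • e)) (x + s • e) :=
      (hf.differentiable (by norm_num) _).hasFDerivAt
    have h2 : HasDerivAt (fun s : ℝ => x + s • e) e s := by
      simpa using ((hasDerivAt_id s).smul_const e).const_add x
    exact h1.comp_hasDerivAt s h2

theorem weak_lin {σ : Fin 2 → E2 → ℝ} (hσ : ∀ i, ContDiff ℝ 1 (σ i))
    (hdiv : ∀ x, pd 0 (σ 0) x + pd 1 (σ 1) x = 0) {φ : E2 → ℝ} (hφ : ContDiff ℝ 1 φ)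
    (hc : HasCompactSupport φ) (k : Fin 2) :
    ∫ x, (pd k (σ 0) x * pd 0 φ x + pd k (σ 1) x * pd 1 φ x) = 0 := by
  set e : E2 := EuclideanSpace.single k (1:ℝ) with he
  have hi : ∀ i, Integrable (fun x => pd k (σ i) x * pd i φ x) := fun i =>
    ((pd_continuous (hσ i) k).mul (pd_continuous hφ i)).integrable_of_hasCompactSupport
      (pd_supp hc i).mul_left
  rw [integral_add (hi 0) (hi 1)]
  have hd := (transl (hσ 0) (pd_continuous hφ 0) (pd_supp hc 0) k).add
    (transl (hσ 1) (pd_continuous hφ 1) (pd_supp hc 1) k)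
  refine hd.unique ?_
  have : ((fun s : ℝ => ∫ x, σ 0 (x + s • EuclideanSpace.single k (1:ℝ)) * pd 0 φ x) +
      fun s : ℝ => ∫ x, σ 1 (x + s • EuclideanSpace.single k (1:ℝ)) * pd 1 φ x) = fun _ => 0 := by
    funext s
    simp only [Pi.add_apply]
    have hs : ∀ i, ContDiff ℝ 1 (fun x => σ i (x + s • EuclideanSpace.single k (1:ℝ))) :=
      fun i => (hσ i).comp (by fun_prop)
    rw [ibp (hs 0) hφ hc, ibp (hs 1) hφ hc, ← neg_add, ← integral_add]
    · have : ∀ x, pd 0 (fun x => σ 0 (x + s • EuclideanSpace.single k (1:ℝ))) x * φ x +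
        pd 1 (fun x => σ 1 (x + s • EuclideanSpace.single k (1:ℝ))) x * φ x = 0 := by
        intro x
        have := hdiv (x + s • EuclideanSpace.single k (1:ℝ))
        unfold pd at this ⊢
        rw [fderiv_comp_add_right, fderiv_comp_add_right, ← add_mul, this, zero_mul]
      simp [this]
    · exact ((pd_continuous (hs 0) 0).mul hφ.continuous).integrable_of_hasCompactSupport hc.mul_left
    · exact ((pd_continuous (hs 1) 1).mul hφ.continuous).integrable_of_hasCompactSupport hc.mul_left
  rw [this]
  exact hasDerivAt_const _ _

theorem exists_cut : ∃ (ψ : ℝ → ℝ) (M : ℝ), ContDiff ℝ 1 ψ ∧ Antitone ψ ∧ (∀ τ, 0 ≤ ψ τ) ∧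
    (∀ τ, ψ τ ≤ 1) ∧
    (∀ τ ≤ 1, ψ τ = 1) ∧ (∀ τ, 2 ≤ τ → ψ τ = 0) ∧ 0 ≤ M ∧ (∀ τ, (deriv ψ τ) ^ 2 ≤ M * ψ τ) ∧
    (∀ τ, τ ≤ 1 → deriv ψ τ = 0) ∧ (∀ τ, 2 ≤ τ → deriv ψ τ = 0) := by
  set c : ℝ → ℝ := fun τ => Real.smoothTransition (2 - τ) with hcdef
  have hc : ContDiff ℝ 1 c := (Real.smoothTransition.contDiff (n := 1)).comp (by fun_prop)
  have c1 : ∀ τ ≤ 1, c τ = 1 := fun τ h => Real.smoothTransition.one_of_one_le (by linarith)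
  have c2 : ∀ τ, 2 ≤ τ → c τ = 0 := fun τ h => Real.smoothTransition.zero_of_nonpos (by linarith)
  have c0 : ∀ τ, 0 ≤ c τ := fun τ => Real.smoothTransition.nonneg _
  have cle : ∀ τ, c τ ≤ 1 := fun τ => Real.smoothTransition.le_one _
  have hanti : Antitone c := fun a b h => Real.smoothTransition.monotone (by linarith)
  have hcd : Continuous (deriv c) := hc.continuous_deriv (by norm_num)
  have hder : ∀ τ, deriv (fun τ => c τ ^ 2) τ = 2 * c τ * deriv c τ := by
    intro τ
    have := ((hc.differentiable (by norm_num)) τ).hasDerivAt.pow 2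
    have h2 := this.deriv
    simp only [Nat.cast_ofNat, Nat.add_one_sub_one, pow_one] at h2
    exact h2
  have d1 : ∀ τ, τ ≤ 1 → deriv c τ = 0 := by
    have hlt : ∀ τ ∈ Iio (1:ℝ), deriv c τ = 0 := by
      intro τ h
      have : c =ᶠ[𝓝 τ] fun _ => 1 := by
        filter_upwards [Iio_mem_nhds h] with y hy using c1 y (le_of_lt hy)
      rw [this.deriv_eq]; simp
    have hcl : IsClosed {τ | deriv c τ = 0} := isClosed_eq hcd continuous_const
    have : closure (Iio (1:ℝ)) ⊆ {τ | deriv c τ = 0} := hcl.closure_subset_iff.2 hlt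
    rw [closure_Iio] at this
    exact this
  obtain ⟨M, hM⟩ := (isCompact_Icc (a := (1:ℝ)) (b := 2)).exists_bound_of_continuousOn hcd.continuousOn
  have hψd : ∀ τ, 2 ≤ τ → deriv (fun τ => c τ ^ 2) τ = 0 := fun τ h => by
    rw [hder, c2 τ h]; ring
  refine ⟨fun τ => c τ ^ 2, 4 * M ^ 2, hc.pow 2, ?_, fun τ => by positivity, ?_, ?_, ?_, by positivity, ?_, ?_, hψd⟩
  · intro a b h
    exact pow_le_pow_left₀ (c0 b) (hanti h) 2
  · intro τ; exact pow_le_one₀ (c0 τ) (cle τ)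
  · intro τ h; simp [c1 τ h]
  · intro τ h; simp [c2 τ h]
  · intro τ
    rcases le_total τ 1 with h | h
    · rw [hder, d1 τ h]; simp; have := c0 τ; positivity
    · rcases le_total τ 2 with h' | h'
      · rw [hder]
        have hb := hM τ ⟨h, h'⟩
        rw [Real.norm_eq_abs] at hb
        have : (deriv c τ) ^ 2 ≤ M ^ 2 := by
          rw [← sq_abs]; exact pow_le_pow_left₀ (abs_nonneg _) hb 2
        nlinarith [sq_nonneg (c τ)]
      · rw [hψd τ h']; simp [c2 τ h']
  · intro τ h; rw [hder, d1 τ h]; ring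

theorem norm_sq_E2 (x : E2) : ‖x‖ ^ 2 = x 0 ^ 2 + x 1 ^ 2 := by
  rw [EuclideanSpace.norm_sq_eq]; simp [Fin.sum_univ_two]

theorem E2_eq (x : E2) : x = x 0 • EuclideanSpace.single 0 (1:ℝ) + x 1 • EuclideanSpace.single 1 (1:ℝ) := by
  ext i; fin_cases i <;> simp

theorem fderiv_apply_pd (f : E2 → ℝ) (x v : E2) :
    fderiv ℝ f x v = v 0 * pd 0 f x + v 1 * pd 1 f x := by
  conv_lhs => rw [E2_eq v]
  simp [pd]

theorem clm_det (f : E2 →L[ℝ] E2) : f.det =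
    f (EuclideanSpace.single 0 1) 0 * f (EuclideanSpace.single 1 1) 1
    - f (EuclideanSpace.single 1 1) 0 * f (EuclideanSpace.single 0 1) 1 := by
  rw [ContinuousLinearMap.det, ← LinearMap.det_toMatrix (EuclideanSpace.basisFun (Fin 2) ℝ).toBasis]
  rw [Matrix.det_fin_two]
  simp [LinearMap.toMatrix_apply]

/-- area estimate -/
theorem area {P Q : E2 → ℝ} (hP : ContDiff ℝ 1 P) (hQ : ContDiff ℝ 1 Q)
    (hinj : ∀ x y, P x = P y → Q x = Q y → x = y)
    (hD : ∀ x, 0 ≤ pd 0 P x * pd 1 Q x - pd 1 P x * pd 0 Q x) 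
    {r : ℝ} (hr : 0 ≤ r) 
    (hcpt : IsCompact {x | P x ^ 2 + Q x ^ 2 ≤ r}) :
    ∫ x in {x | P x ^ 2 + Q x ^ 2 ≤ r}, (pd 0 P x * pd 1 Q x - pd 1 P x * pd 0 Q x) ≤
      r * (volume (Metric.ball (0:E2) 1)).toReal := by
  set Λ : E2 → E2 := fun x => WithLp.toLp 2 ![P x, Q x] with hΛ
  have hΛd : ContDiff ℝ 1 Λ := by
    rw [contDiff_euclidean]
    intro i
    fin_cases i
    · simpa [hΛ] using hP
    · simpa [hΛ] using hQ
  have hdiff := hΛd.differentiable (by norm_num)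
  have hcoord : ∀ x v, fderiv ℝ Λ x v 0 = fderiv ℝ P x v ∧ fderiv ℝ Λ x v 1 = fderiv ℝ Q x v := by
    intro x v
    have h := (hasFDerivWithinAt_univ.2 (hdiff x).hasFDerivAt)
    rw [hasFDerivWithinAt_euclidean] at h
    constructor
    · have h0 := h 0
      rw [hasFDerivWithinAt_univ] at h0
      simp only [hΛ] at h0
      exact (congrArg (fun l => l v) h0.fderiv).symm
    · have h0 := h 1
      rw [hasFDerivWithinAt_univ] at h0
      simp only [hΛ] at h0
      exact (congrArg (fun l => l v) h0.fderiv).symm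
  have hdet : ∀ x, (fderiv ℝ Λ x).det = pd 0 P x * pd 1 Q x - pd 1 P x * pd 0 Q x := by
    intro x
    rw [clm_det, (hcoord _ _).1, (hcoord _ _).2, (hcoord _ _).1, (hcoord _ _).2]
    rfl
  set S := {x | P x ^ 2 + Q x ^ 2 ≤ r} with hS
  have hΛinj : InjOn Λ S := by
    intro x _ y _ h
    apply hinj
    · simpa [hΛ] using congrArg (fun z : E2 => z 0) h
    · simpa [hΛ] using congrArg (fun z : E2 => z 1) h
  have hm : MeasurableSet S := hcpt.isClosed.measurableSet
  have hlin := lintegral_abs_det_fderiv_eq_addHaar_image volume hm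
    (fun x _ => (hdiff x).hasFDerivAt.hasFDerivWithinAt) hΛinj
  have hcont : Continuous fun x => pd 0 P x * pd 1 Q x - pd 1 P x * pd 0 Q x :=
    ((pd_continuous hP 0).mul (pd_continuous hQ 1)).sub ((pd_continuous hP 1).mul (pd_continuous hQ 0))
  rw [integral_eq_lintegral_of_nonneg_ae (Eventually.of_forall hD) hcont.aestronglyMeasurable]
  have h2 : ∫⁻ x in S, ENNReal.ofReal (pd 0 P x * pd 1 Q x - pd 1 P x * pd 0 Q x) = volume (Λ '' S) := by
    rw [← hlin]
    congr 1; funext x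
    rw [hdet, abs_of_nonneg (hD x)]
  rw [h2]
  have h3 : Λ '' S ⊆ Metric.closedBall 0 (√r) := by
    rintro _ ⟨x, hx, rfl⟩
    rw [mem_closedBall_zero_iff]
    apply Real.le_sqrt_of_sq_le
    rw [norm_sq_E2]
    exact hx
  have h4 : volume (Metric.closedBall (0:E2) (√r)) = ENNReal.ofReal r * volume (Metric.ball (0:E2) 1) := by
    rw [Measure.addHaar_closedBall _ _ (Real.sqrt_nonneg r)]
    simp [Real.sq_sqrt hr]
  have h5 := measure_mono (μ := volume) h3
  rw [h4] at h5
  calc (volume (Λ '' S)).toReal ≤ (ENNReal.ofReal r * volume (Metric.ball (0:E2) 1)).toReal := by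
        apply ENNReal.toReal_mono _ h5
        exact ENNReal.mul_ne_top ENNReal.ofReal_ne_top measure_ball_lt_top.ne
    _ = _ := by rw [ENNReal.toReal_mul, ENNReal.toReal_ofReal hr]

theorem seq_zero {G : ℕ → ℝ} {K : ℝ} (hK : 0 ≤ K) (h0 : ∀ n, 0 ≤ G n) (hmono : Monotone G)
    (h1 : ∀ n, ∀ δ > 0, G n ≤ δ * K + G n / δ)
    (h2 : ∀ n, ∀ δ > 0, G (n + 1) ≤ δ * K + (G (n + 2) - G n) / δ) : ∀ n, G n = 0 := by
  have hb : ∀ n, G n ≤ 4 * K := fun n => by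
    have := h1 n 2 (by norm_num); linarith
  have hbdd : BddAbove (range G) := ⟨4 * K, by rintro _ ⟨n, rfl⟩; exact hb n⟩
  have hlim := tendsto_atTop_ciSup hmono hbdd
  set l := ⨆ n, G n with hl
  have hle : ∀ δ > 0, l ≤ δ * K := by
    intro δ hδ
    have t1 := hlim.comp (tendsto_add_atTop_nat 1)
    have t2 := hlim.comp (tendsto_add_atTop_nat 2)
    have t3 : Tendsto (fun n => δ * K + (G (n + 2) - G n) / δ) atTop (𝓝 (δ * K + (l - l) / δ)) :=
      ((t2.sub hlim).div_const δ).const_add _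
    have := le_of_tendsto_of_tendsto' t1 t3 (fun n => h2 n δ hδ)
    simpa using this
  have hl0 : l ≤ 0 := by
    by_contra hcon
    push Not at hcon
    have := hle (l / (2 * (K + 1))) (by positivity)
    have h3 : l / (2 * (K + 1)) * K < l := by
      rw [div_mul_eq_mul_div, div_lt_iff₀ (by positivity)]
      nlinarith
    linarith
  intro n
  have := le_ciSup hbdd n
  linarith [h0 n]

theorem core {P Q L X0 X1 : E2 → ℝ} (hP : ContDiff ℝ 1 P) (hQ : ContDiff ℝ 1 Q)
    (hexp : ∀ x y : E2, (x 0 - y 0) ^ 2 + (x 1 - y 1) ^ 2 ≤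
      (x 0 - y 0) * (P x - P y) + (x 1 - y 1) * (Q x - Q y))
    (hD : ∀ x, 0 ≤ pd 0 P x * pd 1 Q x - pd 1 P x * pd 0 Q x)
    (hLc : Continuous L) (hL0 : ∀ x, 0 ≤ L x)
    (hX0 : Continuous X0) (hX1 : Continuous X1)
    (hweak : ∀ ω : E2 → ℝ, ContDiff ℝ 1 ω → HasCompactSupport ω →
      ∫ x, ω x * L x = - ∫ x, (X0 x * pd 0 ω x + X1 x * pd 1 ω x))
    {C : ℝ} (hC : 0 ≤ C)
    (hptw : ∀ x, (X0 x * pd 0 P x + X1 x * pd 1 P x) ^ 2 + (X0 x * pd 0 Q x + X1 x * pd 1 Q x) ^ 2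
      ≤ C * L x * (pd 0 P x * pd 1 Q x - pd 1 P x * pd 0 Q x)) :
    ∀ x, L x = 0 := by
  obtain ⟨ψ, M, hψ, hψa, hψ0, hψ1, hψl, hψr, hM, hψM, hdl, hdr⟩ := exists_cut
  set D : E2 → ℝ := fun x => pd 0 P x * pd 1 Q x - pd 1 P x * pd 0 Q x with hDdef
  have hDc : Continuous D :=
    ((pd_continuous hP 0).mul (pd_continuous hQ 1)).sub ((pd_continuous hP 1).mul (pd_continuous hQ 0))
  set s : E2 → ℝ := fun x => P x ^ 2 + Q x ^ 2 with hsdef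
  have hs : ContDiff ℝ 1 s := (hP.pow 2).add (hQ.pow 2)
  have hs0 : ∀ x, 0 ≤ s x := fun x => by positivity
  have hinj : ∀ x y, P x = P y → Q x = Q y → x = y := by
    intro x y h1 h2
    have := hexp x y
    rw [h1, h2] at this
    have ha : x 0 - y 0 = 0 := by nlinarith [sq_nonneg (x 0 - y 0), sq_nonneg (x 1 - y 1)]
    have hb : x 1 - y 1 = 0 := by nlinarith [sq_nonneg (x 0 - y 0), sq_nonneg (x 1 - y 1)]
    ext i; fin_cases i
    · simpa using sub_eq_zero.1 ha
    · simpa using sub_eq_zero.1 hb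
  have hcpt : ∀ r, IsCompact {x | s x ≤ r} := by
    intro r
    apply Metric.isCompact_of_isClosed_isBounded
    · exact isClosed_le hs.continuous continuous_const
    · rw [isBounded_iff_forall_norm_le]
      refine ⟨√(2 * r + 2 * s 0), fun x hx => ?_⟩
      apply Real.le_sqrt_of_sq_le
      rw [norm_sq_E2]
      have h1 := hexp x 0
      simp only [PiLp.zero_apply, sub_zero] at h1
      have h2 : x 0 ^ 2 + x 1 ^ 2 ≤ (P x - P 0) ^ 2 + (Q x - Q 0) ^ 2 := by
        nlinarith [sq_nonneg (x 0 - (P x - P 0)), sq_nonneg (x 1 - (Q x - Q 0))]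
      have hx' : P x ^ 2 + Q x ^ 2 ≤ r := hx
      simp only [hsdef]
      nlinarith [sq_nonneg (P x + P 0), sq_nonneg (Q x + Q 0)]
  set N : ℕ → ℝ := fun n => 2 ^ n with hN
  have hNpos : ∀ n, 0 < N n := fun n => by positivity
  set ω : ℕ → E2 → ℝ := fun n x => ψ (s x / N n) with hω
  have hωC : ∀ n, ContDiff ℝ 1 (ω n) := fun n => hψ.comp (hs.div_const _)
  have hωz : ∀ n x, 2 * N n ≤ s x → ω n x = 0 := fun n x h =>
    hψr _ (by rw [le_div_iff₀ (hNpos n)]; exact h)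
  have hωs : ∀ n, HasCompactSupport (ω n) := fun n => by
    apply HasCompactSupport.intro (hcpt (2 * N n))
    intro x hx
    simp only [mem_ofPred_eq, not_le] at hx
    exact hωz n x hx.le
  have hωLi : ∀ n, Integrable (fun x => ω n x * L x) := fun n =>
    ((hωC n).continuous.mul hLc).integrable_of_hasCompactSupport (hωs n).mul_right
  have hωmono : ∀ n m, n ≤ m → ∀ x, ω n x ≤ ω m x := by
    intro n m h x
    apply hψa
    apply div_le_div_of_nonneg_left (hs0 x) (hNpos n)
    exact pow_le_pow_right₀ (by norm_num) h
  set G : ℕ → ℝ := fun n => ∫ x, ω n x * L x with hG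
  set K : ℝ := 8 * M * C with hK
  have hK0 : 0 ≤ K := by positivity
  -- pointwise bound
  have hy : ∀ n x, (X0 x * pd 0 (ω n) x + X1 x * pd 1 (ω n) x) ^ 2 ≤ (K * D x / N n) * (ω n x * L x) ∧
      ((s x ≤ N n ∨ 2 * N n ≤ s x) → X0 x * pd 0 (ω n) x + X1 x * pd 1 (ω n) x = 0) := by
    intro n x
    have hpd : ∀ i, pd i (ω n) x =
        deriv ψ (s x / N n) * (2 * (P x * pd i P x + Q x * pd i Q x) / N n) := by
      intro i
      have e1 : HasFDerivAt s ((2 * P x) • fderiv ℝ P x + (2 * Q x) • fderiv ℝ Q x) x := by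
        have a := ((hP.differentiable (by norm_num)) x).hasFDerivAt.pow 2
        have b := ((hQ.differentiable (by norm_num)) x).hasFDerivAt.pow 2
        have := a.add b
        simp only [Nat.add_one_sub_one, pow_one, nsmul_eq_mul, Nat.cast_ofNat] at this
        exact this
      have e2 : HasFDerivAt (fun x => s x / N n) ((N n)⁻¹ • ((2 * P x) • fderiv ℝ P x + (2 * Q x) • fderiv ℝ Q x)) x := by
        simp only [div_eq_inv_mul]
        exact e1.const_mul _
      have e3 := ((hψ.differentiable (by norm_num)) (s x / N n)).hasDerivAt.comp_hasFDerivAt x e2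
      have e4 : fderiv ℝ (ω n) x = _ := e3.fderiv
      unfold pd
      rw [e4]
      simp
      ring
    have hsum : X0 x * pd 0 (ω n) x + X1 x * pd 1 (ω n) x = deriv ψ (s x / N n) *
        (2 / N n * (P x * (X0 x * pd 0 P x + X1 x * pd 1 P x) + Q x * (X0 x * pd 0 Q x + X1 x * pd 1 Q x))) := by
      rw [hpd 0, hpd 1]; ring
    have hzero : (s x ≤ N n ∨ 2 * N n ≤ s x) → X0 x * pd 0 (ω n) x + X1 x * pd 1 (ω n) x = 0 := by
      rintro (h | h)
      · rw [hsum, hdl _ (by rw [div_le_one (hNpos n)]; exact h), zero_mul]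
      · rw [hsum, hdr _ (by rw [le_div_iff₀ (hNpos n)]; exact h), zero_mul]
    refine ⟨?_, hzero⟩
    have hR : 0 ≤ (K * D x / N n) * (ω n x * L x) :=
      mul_nonneg (div_nonneg (mul_nonneg hK0 (hD x)) (hNpos n).le) (mul_nonneg (hψ0 _) (hL0 x))
    rcases le_total (2 * N n) (s x) with h | h
    · rw [hzero (Or.inr h)]; simpa using hR
    rw [hsum]
    set a := X0 x * pd 0 P x + X1 x * pd 1 P x
    set b := X0 x * pd 0 Q x + X1 x * pd 1 Q x
    have hcs : (P x * a + Q x * b) ^ 2 ≤ (2 * N n) * (C * L x * D x) := by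
      calc (P x * a + Q x * b) ^ 2 ≤ s x * (a ^ 2 + b ^ 2) := by
            simp only [hsdef]; nlinarith [sq_nonneg (P x * b - Q x * a)]
        _ ≤ (2 * N n) * (C * L x * D x) := by
            apply mul_le_mul h (hptw x) (by positivity) (by have := hNpos n; positivity)
    have hcs0 : 0 ≤ (P x * a + Q x * b) ^ 2 := sq_nonneg _
    calc (deriv ψ (s x / N n) * (2 / N n * (P x * a + Q x * b))) ^ 2
        = (deriv ψ (s x / N n)) ^ 2 * ((2 / N n) ^ 2 * (P x * a + Q x * b) ^ 2) := by ring
      _ ≤ (M * ω n x) * ((2 / N n) ^ 2 * ((2 * N n) * (C * L x * D x))) := by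
          apply mul_le_mul (hψM _) _ (by positivity) (mul_nonneg hM (hψ0 _))
          exact mul_le_mul_of_nonneg_left hcs (by positivity)
      _ = _ := by
          have := (hNpos n).ne'
          rw [hK]; field_simp; ring
  set V : ℝ := 2 * (volume (Metric.ball (0:E2) 1)).toReal with hV
  have hV0 : 0 ≤ V := by positivity
  have harea : ∀ n, ∫ x, indicator {x | s x ≤ 2 * N n} D x ≤ N n * V := by
    intro n
    have hm : MeasurableSet {x | s x ≤ 2 * N n} := (hcpt _).isClosed.measurableSet
    rw [integral_indicator hm]
    have := area hP hQ hinj hD (r := 2 * N n) (by have := hNpos n; positivity) (hcpt _)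
    calc _ ≤ _ := this
      _ = _ := by rw [hV]; ring
  have hind : ∀ n, Integrable (indicator {x | s x ≤ 2 * N n} D) := by
    intro n
    have hm : MeasurableSet {x | s x ≤ 2 * N n} := (hcpt _).isClosed.measurableSet
    rw [integrable_indicator_iff hm]
    exact hDc.continuousOn.integrableOn_compact (hcpt _)
  have hgen : ∀ n, ∀ δ > 0, ∀ W : E2 → ℝ, Integrable W → (∀ x, 0 ≤ W x) →
      (∀ x, N n ≤ s x → s x ≤ 2 * N n → ω n x * L x ≤ W x) →
      G n ≤ δ * (K * V) + (∫ x, W x) / δ := by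
    intro n δ hδ W hWi hW0 hW
    rw [hG]
    simp only
    rw [hweak (ω n) (hωC n) (hωs n), ← integral_neg]
    have hWi' := (hWi.div_const δ)
    have hI' := ((hind n).const_mul (δ * K / N n))
    calc ∫ x, -(X0 x * pd 0 (ω n) x + X1 x * pd 1 (ω n) x)
        ≤ ∫ x, (δ * K / N n * indicator {x | s x ≤ 2 * N n} D x + W x / δ) := by
          apply integral_mono
          · apply Integrable.neg
            apply Integrable.add
            · exact (hX0.mul (pd_continuous (hωC n) 0)).integrable_of_hasCompactSupport (pd_supp (hωs n) 0).mul_left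
            · exact (hX1.mul (pd_continuous (hωC n) 1)).integrable_of_hasCompactSupport (pd_supp (hωs n) 1).mul_left
          · exact hI'.add hWi'
          · intro x
            simp only
            obtain ⟨h1, h2⟩ := hy n x
            have hnn : 0 ≤ δ * K / N n * indicator {x | s x ≤ 2 * N n} D x + W x / δ := by
              have := hNpos n
              have : 0 ≤ indicator {x | s x ≤ 2 * N n} D x := indicator_nonneg (fun x _ => hD x) x
              have := hW0 x
              positivity
            rcases le_total (s x) (N n) with h | h
            · rw [h2 (Or.inl h)]; simpa using hnn
            rcases le_or_gt (2 * N n) (s x) with h' | h'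
            · rw [h2 (Or.inr h')]; simpa using hnn
            rw [indicator_of_mem (show x ∈ {x | s x ≤ 2 * N n} from h'.le)]
            set y := X0 x * pd 0 (ω n) x + X1 x * pd 1 (ω n) x
            have hWx := hW x h h'.le
            have hα : 0 ≤ K * D x / N n := div_nonneg (mul_nonneg hK0 (hD x)) (hNpos n).le
            have hy2 : y ^ 2 ≤ (K * D x / N n) * W x := h1.trans (mul_le_mul_of_nonneg_left hWx hα)
            have e1 : δ * K / N n * D x = δ * (K * D x / N n) := by ring
            rw [e1]
            have hq : y ^ 2 ≤ (δ * (K * D x / N n)) * (W x / δ) := by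
              calc _ ≤ _ := hy2
                _ = _ := by field_simp
            have p1 : 0 ≤ δ * (K * D x / N n) := by positivity
            have p2 : 0 ≤ W x / δ := div_nonneg (hW0 x) hδ.le
            have : (-y) ^ 2 ≤ (δ * (K * D x / N n) + W x / δ) ^ 2 := by nlinarith
            exact le_of_abs_le (abs_le_of_sq_le_sq this (by positivity))
      _ = δ * K / N n * (∫ x, indicator {x | s x ≤ 2 * N n} D x) + (∫ x, W x) / δ := by
          rw [integral_add hI' hWi', integral_const_mul, integral_div]
      _ ≤ δ * K / N n * (N n * V) + (∫ x, W x) / δ := by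
          have h1 : 0 ≤ δ * K / N n := div_nonneg (mul_nonneg hδ.le hK0) (hNpos n).le
          exact add_le_add_left (mul_le_mul_of_nonneg_left (harea n) h1) _
      _ = _ := by have := (hNpos n).ne'; field_simp
  have hGz := seq_zero (G := G) (K := K * V) (by positivity)
    (fun n => integral_nonneg fun x => mul_nonneg (hψ0 _) (hL0 x))
    (fun n m h => integral_mono (hωLi n) (hωLi m)
      fun x => mul_le_mul_of_nonneg_right (hωmono n m h x) (hL0 x))
    (fun n δ hδ => hgen n δ hδ _ (hωLi n) (fun x => mul_nonneg (hψ0 _) (hL0 x)) fun x _ _ => le_rfl)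
    (fun n δ hδ => by
      have := hgen (n + 1) δ hδ (fun x => ω (n + 2) x * L x - ω n x * L x)
        ((hωLi _).sub (hωLi _))
        (fun x => sub_nonneg.2 (mul_le_mul_of_nonneg_right (hωmono n (n + 2) (by omega) x) (hL0 x)))
        (fun x h1 h2 => by
          have a : ω n x = 0 := hωz n x (by
            calc 2 * N n = N (n + 1) := by simp only [hN]; ring
              _ ≤ _ := h1)
          have b : ω (n + 2) x = 1 := hψl _ (by
            rw [div_le_one (hNpos _)]
            calc s x ≤ _ := h2
              _ = N (n + 2) := by simp only [hN]; ring)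
          rw [a, b]
          have : ω (n + 1) x ≤ 1 := hψ1 _
          simp
          exact mul_le_of_le_one_left (hL0 x) this)
      rwa [integral_sub (hωLi _) (hωLi _)] at this)
  intro x
  obtain ⟨n, hn⟩ := pow_unbounded_of_one_lt (s x) (by norm_num : (1:ℝ) < 2)
  have h1 := hGz n
  have hcont : Continuous fun x => ω n x * L x := (hωC n).continuous.mul hLc
  have h2 := (integral_eq_zero_iff_of_nonneg (fun x => mul_nonneg (hψ0 _) (hL0 x)) (hωLi n)).1 h1
  have h3 := (Continuous.ae_eq_iff_eq volume hcont continuous_const).1 h2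
  have h4 : ω n x * L x = 0 := congrFun h3 x
  have h5 : ω n x = 1 := hψl _ (by rw [div_le_one (hNpos _)]; exact hn.le)
  rwa [h5, one_mul] at h4

theorem alg_id (Z0 Z1 H00 H01 H11 k m mp n : ℝ)
    (L : ℝ) (hL : L = (k * H00 + m * (H00 * Z0 + H01 * Z1) * Z0) * (mp * H00 - n * (H00 * Z0 + H01 * Z1) * Z0)
      + (k * H01 + m * (H00 * Z0 + H01 * Z1) * Z1) * (mp * H01 - n * (H01 * Z0 + H11 * Z1) * Z0)
      + (k * H01 + m * (H01 * Z0 + H11 * Z1) * Z0) * (mp * H01 - n * (H00 * Z0 + H01 * Z1) * Z1)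
      + (k * H11 + m * (H01 * Z0 + H11 * Z1) * Z1) * (mp * H11 - n * (H01 * Z0 + H11 * Z1) * Z1)) :
    (Z0 ^ 2 + Z1 ^ 2) ^ 2 * L = 
      (mp - n * (Z0 ^ 2 + Z1 ^ 2)) * ((k + m * (Z0 ^ 2 + Z1 ^ 2)) * (Z0 * (H00 * Z0 + H01 * Z1) + Z1 * (H01 * Z0 + H11 * Z1)) ^ 2
        + k * (Z0 * (H01 * Z0 + H11 * Z1) - Z1 * (H00 * Z0 + H01 * Z1)) ^ 2)
      + mp * ((k + m * (Z0 ^ 2 + Z1 ^ 2)) * (Z0 * (H01 * Z0 + H11 * Z1) - Z1 * (H00 * Z0 + H01 * Z1)) ^ 2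
        + k * (Z0 ^ 2 * H11 - 2 * Z0 * Z1 * H01 + Z1 ^ 2 * H00) ^ 2) := by
  subst hL
  ring

set_option maxHeartbeats 1000000 in
theorem alg_main (Z0 Z1 H00 H01 H11 k m l w h F C mp n : ℝ)
    (hl : l = k + m * (Z0 ^ 2 + Z1 ^ 2)) (hk : 0 ≤ k) (hl0 : 0 ≤ l)
    (hw : 1 ≤ w) (hw2 : w ^ 2 = 1 + (Z0 ^ 2 + Z1 ^ 2))
    (hmp : mp = 1 / (1 + w)) (hn : n = 1 / (w * (1 + w) ^ 2))
    (hh : 1 ≤ h) (hF : F = h + k * (Z0 ^ 2 + Z1 ^ 2)) (hC : 0 ≤ C)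
    (hb1 : l * F * w ^ 2 ≤ C * h) (hb2 : h * k * w ^ 2 ≤ C * F)
    (S00 S01 S10 S11 : ℝ) (hS00 : S00 = k * H00 + m * (H00 * Z0 + H01 * Z1) * Z0)
    (hS01 : S01 = k * H01 + m * (H00 * Z0 + H01 * Z1) * Z1)
    (hS10 : S10 = k * H01 + m * (H01 * Z0 + H11 * Z1) * Z0)
    (hS11 : S11 = k * H11 + m * (H01 * Z0 + H11 * Z1) * Z1)
    (L : ℝ) (hL : L = S00 * (mp * H00 - n * (H00 * Z0 + H01 * Z1) * Z0)
      + S01 * (mp * H01 - n * (H01 * Z0 + H11 * Z1) * Z0)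
      + S10 * (mp * H01 - n * (H00 * Z0 + H01 * Z1) * Z1)
      + S11 * (mp * H11 - n * (H01 * Z0 + H11 * Z1) * Z1))
    (X0 X1 : ℝ) (hX0 : X0 = mp * (Z0 * S00 + Z1 * S10)) (hX1 : X1 = mp * (Z0 * S01 + Z1 * S11)) :
    0 ≤ L ∧ (X0 * (h + k * Z0 * Z0) + X1 * (k * Z0 * Z1)) ^ 2
      + (X0 * (k * Z1 * Z0) + X1 * (h + k * Z1 * Z1)) ^ 2 ≤ C * L * (F * h) ∧
    (L = 0 → 0 < k → 0 < l → H00 * Z0 + H01 * Z1 = 0 ∧ H01 * Z0 + H11 * Z1 = 0 ∧ 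
      (0 < Z0 ^ 2 + Z1 ^ 2 → H00 = 0 ∧ H01 = 0 ∧ H11 = 0)) := by
  have hw0 : 0 < w := by linarith
  have hmp0 : 0 < mp := by rw [hmp]; positivity
  have hme : mp - n * (Z0 ^ 2 + Z1 ^ 2) = mp / w := by
    have : Z0 ^ 2 + Z1 ^ 2 = w ^ 2 - 1 := by linarith
    rw [this, hmp, hn]; field_simp; ring
  have hid := alg_id Z0 Z1 H00 H01 H11 k m mp n L (by rw [hL, hS00, hS01, hS10, hS11])
  rw [hme, ← hl] at hid
  set α := Z0 * (H00 * Z0 + H01 * Z1) + Z1 * (H01 * Z0 + H11 * Z1) with hα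
  set β := Z0 * (H01 * Z0 + H11 * Z1) - Z1 * (H00 * Z0 + H01 * Z1) with hβ
  set γ := Z0 ^ 2 * H11 - 2 * Z0 * Z1 * H01 + Z1 ^ 2 * H00 with hγ
  set T := Z0 ^ 2 + Z1 ^ 2 with hT
  have hT0 : 0 ≤ T := by positivity
  have hF0 : 0 < F := by rw [hF]; positivity
  have hh0 : 0 < h := by linarith
  rcases hT0.eq_or_lt with hTz | hTp
  · have z0 : Z0 = 0 := by
      have : Z0 ^ 2 = 0 := by linarith [sq_nonneg Z0, sq_nonneg Z1]
      simpa using this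
    have z1 : Z1 = 0 := by
      have : Z1 ^ 2 = 0 := by linarith [sq_nonneg Z0, sq_nonneg Z1]
      simpa using this
    have hL' : L = k * mp * (H00 ^ 2 + 2 * H01 ^ 2 + H11 ^ 2) := by
      rw [hL, hS00, hS01, hS10, hS11, z0, z1]; ring
    have hLn : 0 ≤ L := by rw [hL']; positivity
    refine ⟨hLn, ?_, ?_⟩
    · rw [hX0, hX1, z0, z1]; simp; positivity
    · intro _ _ _
      rw [z0, z1]; simp; intro hlt; linarith
  have hLn : 0 ≤ L := by
    have : 0 ≤ T ^ 2 * L := by rw [hid]; positivity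
    exact nonneg_of_mul_nonneg_right this (by positivity)
  refine ⟨hLn, ?_, ?_⟩
  · set V := (X0 * (h + k * Z0 * Z0) + X1 * (k * Z0 * Z1)) ^ 2
      + (X0 * (k * Z1 * Z0) + X1 * (h + k * Z1 * Z1)) ^ 2 with hV
    have hVid : T * V = mp ^ 2 * (l ^ 2 * F ^ 2 * α ^ 2 + h ^ 2 * k ^ 2 * β ^ 2) := by
      rw [hV, hX0, hX1, hS00, hS01, hS10, hS11, hl, hF, hα, hβ, hT]; ring
    have hTm : T * mp ^ 2 ≤ w ^ 2 * (mp / w) := by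
      have : T = w ^ 2 - 1 := by linarith
      rw [this, hmp]
      have : (w ^ 2 - 1) * (1 / (1 + w)) ^ 2 = (w - 1) * (1 / (1 + w)) := by field_simp; ring
      rw [this]
      have : w ^ 2 * (1 / (1 + w) / w) = w * (1 / (1 + w)) := by field_simp
      rw [this]
      apply mul_le_mul_of_nonneg_right (by linarith) (by positivity)
    have h1 : T ^ 2 * V ≤ T ^ 2 * (C * L * (F * h)) := by
      calc T ^ 2 * V = (T * mp ^ 2) * (l ^ 2 * F ^ 2 * α ^ 2 + h ^ 2 * k ^ 2 * β ^ 2) := by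
            rw [pow_two, mul_assoc, hVid]; ring
        _ ≤ (w ^ 2 * (mp / w)) * (l ^ 2 * F ^ 2 * α ^ 2 + h ^ 2 * k ^ 2 * β ^ 2) :=
            mul_le_mul_of_nonneg_right hTm (by positivity)
        _ = (mp / w) * ((l * F * w ^ 2) * (l * F * α ^ 2) + (h * k * w ^ 2) * (h * k * β ^ 2)) := by ring
        _ ≤ (mp / w) * ((C * h) * (l * F * α ^ 2) + (C * F) * (h * k * β ^ 2)) := by
            gcongr
        _ = C * (F * h) * ((mp / w) * (l * α ^ 2 + k * β ^ 2)) := by ring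
        _ ≤ C * (F * h) * (T ^ 2 * L) := by
            rw [hid]
            apply mul_le_mul_of_nonneg_left _ (by positivity)
            have : 0 ≤ mp * (l * β ^ 2 + k * γ ^ 2) := by positivity
            linarith
        _ = _ := by ring
    exact le_of_mul_le_mul_left h1 (by positivity)
  · intro hLz hk0 hl0'
    rw [hLz, mul_zero] at hid
    have p1 : 0 < mp / w := by positivity
    have q1 : 0 ≤ mp / w * (l * α ^ 2 + k * β ^ 2) := by positivity
    have q2 : 0 ≤ mp * (l * β ^ 2 + k * γ ^ 2) := by positivity
    have e1 : mp / w * (l * α ^ 2 + k * β ^ 2) = 0 := by linarith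
    have e2 : mp * (l * β ^ 2 + k * γ ^ 2) = 0 := by linarith
    have e3 : l * α ^ 2 + k * β ^ 2 = 0 := (mul_eq_zero.1 e1).resolve_left p1.ne'
    have e4 : l * β ^ 2 + k * γ ^ 2 = 0 := (mul_eq_zero.1 e2).resolve_left hmp0.ne'
    have a0 : α = 0 := by
      have : l * α ^ 2 = 0 := by
        linarith [mul_nonneg hl0 (sq_nonneg α), mul_nonneg hk (sq_nonneg β)]
      simpa [hl0'.ne'] using this
    have b0 : β = 0 := by
      have : l * β ^ 2 = 0 := by
        linarith [mul_nonneg hl0 (sq_nonneg β), mul_nonneg hk (sq_nonneg γ)]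
      simpa [hl0'.ne'] using this
    have g0 : γ = 0 := by
      have : k * γ ^ 2 = 0 := by
        linarith [mul_nonneg hl0 (sq_nonneg β), mul_nonneg hk (sq_nonneg γ)]
      simpa [hk0.ne'] using this
    have r1 : T * (H00 * Z0 + H01 * Z1) = 0 := by
      have : T * (H00 * Z0 + H01 * Z1) = Z0 * α - Z1 * β := by rw [hα, hβ, hT]; ring
      rw [this, a0, b0]; ring
    have r2 : T * (H01 * Z0 + H11 * Z1) = 0 := by
      have : T * (H01 * Z0 + H11 * Z1) = Z1 * α + Z0 * β := by rw [hα, hβ, hT]; ring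
      rw [this, a0, b0]; ring
    refine ⟨(mul_eq_zero.1 r1).resolve_left hTp.ne', (mul_eq_zero.1 r2).resolve_left hTp.ne', fun _ => ?_⟩
    have hT2 : T ^ 2 ≠ 0 := by positivity
    have s0 : T ^ 2 * H00 = 0 := by
      have : T ^ 2 * H00 = Z0 ^ 2 * α - 2 * Z0 * Z1 * β + Z1 ^ 2 * γ := by rw [hα, hβ, hγ, hT]; ring
      rw [this, a0, b0, g0]; ring
    have s1 : T ^ 2 * H01 = 0 := by
      have : T ^ 2 * H01 = Z0 * Z1 * α + (Z0 ^ 2 - Z1 ^ 2) * β - Z0 * Z1 * γ := by rw [hα, hβ, hγ, hT]; ring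
      rw [this, a0, b0, g0]; ring
    have s2 : T ^ 2 * H11 = 0 := by
      have : T ^ 2 * H11 = Z1 ^ 2 * α + 2 * Z0 * Z1 * β + Z0 ^ 2 * γ := by rw [hα, hβ, hγ, hT]; ring
      rw [this, a0, b0, g0]; ring
    exact ⟨(mul_eq_zero.1 s0).resolve_left hT2, (mul_eq_zero.1 s1).resolve_left hT2,
      (mul_eq_zero.1 s2).resolve_left hT2⟩

/-- `k t = g'(t)/t`, with `k 0 = g''(0)`. -/
def kk (g : ℝ → ℝ) (t : ℝ) : ℝ := dslope (deriv g) 0 t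

def mm (g : ℝ → ℝ) (t : ℝ) : ℝ := (deriv (deriv g) t - kk g t) / t ^ 2

theorem one_d (g : ℝ → ℝ) (hg : ContDiff ℝ 2 g) (a₅ μ : ℝ) (ha₅ : 0 < a₅) (hμ : 3 ≤ μ)
    (hg'0 : deriv g 0 = 0) (hg'' : ∀ t : ℝ, 0 < t → 0 < deriv (deriv g) t)
    (hell : ∀ t : ℝ, 0 ≤ t → deriv (deriv g) t ≤ a₅ * (1 + t) ^ (-μ)) :
    ContDiff ℝ 1 (deriv g) ∧ Continuous (kk g) ∧ (∀ t, deriv g t = t * kk g t) ∧ 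
    kk g 0 = deriv (deriv g) 0 ∧
    (∀ t, 0 ≤ t → 0 ≤ kk g t) ∧ (∀ t, 0 < t → 0 < kk g t) ∧ (∀ t, 0 ≤ t → 0 ≤ deriv (deriv g) t) ∧
    (∀ t, 0 ≤ t → kk g t * (1 + t) ≤ a₅) ∧ (∀ t, 0 ≤ t → deriv (deriv g) t * (1 + t) ^ 3 ≤ a₅) ∧
    (∀ t, 0 ≤ t → 1 ≤ g t - t * deriv g t - g 0 + a₅ + 1 ∧ g t - t * deriv g t - g 0 + a₅ + 1 ≤ 1 + a₅) := by
  have hd : ContDiff ℝ 1 (deriv g) := by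
    have : ContDiff ℝ (1 + 1) g := by simpa [one_add_one_eq_two] using hg
    exact (contDiff_succ_iff_deriv.1 this).2.2
  have hdd : Continuous (deriv (deriv g)) := hd.continuous_deriv (by norm_num)
  have hdiff := hd.differentiable (by norm_num)
  have hgd := hg.differentiable (by norm_num)
  have hk0 : kk g 0 = deriv (deriv g) 0 := by simp [kk]
  have hkm : ∀ t, deriv g t = t * kk g t := by
    intro t
    have := sub_smul_dslope (deriv g) 0 t
    simp [hg'0] at this
    exact this.symm
  have hkc : Continuous (kk g) := by
    rw [continuous_iff_continuousAt]
    intro t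
    by_cases h : t = 0
    · subst h
      exact continuousAt_dslope_same.2 (hdiff 0)
    · exact (continuousAt_dslope_of_ne h).2 hd.continuous.continuousAt
  have hdd0 : ∀ t, 0 ≤ t → 0 ≤ deriv (deriv g) t := by
    have hcl : IsClosed {t | 0 ≤ deriv (deriv g) t} := isClosed_le continuous_const hdd
    have : closure (Ioi (0:ℝ)) ⊆ {t | 0 ≤ deriv (deriv g) t} :=
      hcl.closure_subset_iff.2 (fun t ht => (hg'' t ht).le)
    rw [closure_Ioi] at this
    exact fun t ht => this ht
  have hell3 : ∀ t, 0 ≤ t → deriv (deriv g) t * (1 + t) ^ 3 ≤ a₅ := by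
    intro t ht
    have h1 : (1 + t) ^ (-μ) ≤ (1 + t) ^ (-3:ℝ) :=
      Real.rpow_le_rpow_of_exponent_le (by linarith) (by linarith)
    have h2 : (1 + t) ^ (-3:ℝ) = ((1 + t) ^ 3)⁻¹ := by
      rw [Real.rpow_neg (by linarith)]; norm_cast
    rw [h2] at h1
    have h3 := (hell t ht).trans (mul_le_mul_of_nonneg_left h1 ha₅.le)
    rwa [← div_eq_mul_inv, le_div_iff₀ (by positivity)] at h3
  have hell2 : ∀ t, 0 ≤ t → deriv (deriv g) t ≤ a₅ / (1 + t) ^ 2 := by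
    intro t ht
    rw [le_div_iff₀ (by positivity)]
    have := hell3 t ht
    have h0 := hdd0 t ht
    have : deriv (deriv g) t * (1 + t) ^ 2 ≤ deriv (deriv g) t * (1 + t) ^ 3 := by
      apply mul_le_mul_of_nonneg_left _ h0
      exact pow_le_pow_right₀ (by linarith) (by norm_num)
    linarith
  have hq : ∀ t, 0 ≤ t → HasDerivAt (fun t : ℝ => a₅ / (1 + t)) (-(a₅ / (1 + t) ^ 2)) t := by
    intro t ht
    have h1 : HasDerivAt (fun t : ℝ => 1 + t) 1 t := by simpa using (hasDerivAt_id t).const_add 1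
    have := (h1.inv (by linarith)).const_mul a₅
    simp only [div_eq_mul_inv]
    exact this.congr_deriv (by rw [div_eq_mul_inv]; ring)
  -- monotonicity helper
  have mono : ∀ (f f' : ℝ → ℝ), (∀ t, 0 ≤ t → HasDerivAt f (f' t) t) → (∀ t, 0 ≤ t → 0 ≤ f' t) →
      ∀ t, 0 ≤ t → f 0 ≤ f t := by
    intro f f' h1 h2 t ht
    have : MonotoneOn f (Ici 0) := by
      apply monotoneOn_of_deriv_nonneg (convex_Ici 0)
      · exact fun x hx => (h1 x hx).continuousAt.continuousWithinAt
      · intro x hx; rw [interior_Ici] at hx; exact (h1 x (le_of_lt hx)).differentiableAt.differentiableWithinAt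
      · intro x hx; rw [interior_Ici] at hx; rw [(h1 x (le_of_lt hx)).deriv]; exact h2 x (le_of_lt hx)
    exact this (mem_Ici.2 le_rfl) ht ht
  have hsm : StrictMonoOn (deriv g) (Ici 0) := by
    apply strictMonoOn_of_deriv_pos (convex_Ici 0) hd.continuous.continuousOn
    intro x hx; rw [interior_Ici] at hx; exact hg'' x hx
  have hkpos : ∀ t, 0 < t → 0 < kk g t := by
    intro t ht
    have h1 := hsm (mem_Ici.2 le_rfl) (mem_Ici.2 ht.le) ht
    rw [hg'0, hkm t] at h1
    exact pos_of_mul_pos_right h1 ht.le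
  have hk0' : 0 ≤ kk g 0 := by rw [hk0]; exact hdd0 0 le_rfl
  have hknn : ∀ t, 0 ≤ t → 0 ≤ kk g t := by
    intro t ht
    rcases ht.eq_or_lt with h | h
    · rw [← h]; exact hk0'
    · exact (hkpos t h).le
  refine ⟨hd, hkc, hkm, hk0, hknn, hkpos, hdd0, ?_, hell3, ?_⟩
  · intro t ht
    rcases ht.eq_or_lt with h | h
    · rw [← h, hk0]
      have := hell3 0 le_rfl
      simpa using this
    · have h1 := mono (fun t => -deriv g t - a₅ / (1 + t)) _
        (fun t ht => ((hdiff t).hasDerivAt.neg).sub (hq t ht))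
        (fun t ht => by linarith [hell2 t ht]) t ht
      simp only [hg'0] at h1
      rw [hkm t] at h1
      have h2 : t * kk g t ≤ a₅ - a₅ / (1 + t) := by simpa using (by linarith : t * kk g t ≤ a₅ / (1 + 0) - a₅ / (1 + t))
      have h3 : a₅ - a₅ / (1 + t) = t * (a₅ / (1 + t)) := by field_simp; ring
      rw [h3] at h2
      have h4 := le_of_mul_le_mul_left h2 h
      rwa [le_div_iff₀ (by linarith)] at h4
  · intro t ht
    have hder : ∀ t, HasDerivAt (fun t => g t - t * deriv g t) (-(t * deriv (deriv g) t)) t := by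
      intro t
      have := (hgd t).hasDerivAt.sub ((hasDerivAt_id t).mul (hdiff t).hasDerivAt)
      exact this.congr_deriv (by simp)
    constructor
    · have h1 := mono (fun t => (g t - t * deriv g t) - a₅ / (1 + t)) _
        (fun t ht => (hder t).sub (hq t ht)) (fun t ht => by
          have h0 := hdd0 t ht
          have h2 : t * deriv (deriv g) t ≤ a₅ / (1 + t) ^ 2 := by
            rw [le_div_iff₀ (by positivity)]
            calc t * deriv (deriv g) t * (1 + t) ^ 2 ≤ (1 + t) * deriv (deriv g) t * (1 + t) ^ 2 := by
                  gcongr; linarith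
              _ = deriv (deriv g) t * (1 + t) ^ 3 := by ring
              _ ≤ a₅ := hell3 t ht
          linarith) t ht
      simp at h1
      have : 0 ≤ a₅ / (1 + t) := by positivity
      linarith
    · have h1 := mono (fun t => -(g t - t * deriv g t)) _
        (fun t ht => (hder t).neg) (fun t ht => by
          have h0 := hdd0 t ht
          simp; positivity) t ht
      simp at h1
      linarith

/-- the stress map -/
def SS (g : ℝ → ℝ) (Z : E2) : E2 := kk g ‖Z‖ • Z

def AA (g : ℝ → ℝ) (Z : E2) : E2 →L[ℝ] E2 :=
  kk g ‖Z‖ • ContinuousLinearMap.id ℝ E2 + mm g ‖Z‖ • (innerSL ℝ Z).smulRight Z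

theorem norm_hasFDerivAt {Z : E2} (hZ : Z ≠ 0) : HasFDerivAt (fun Z : E2 => ‖Z‖) (‖Z‖⁻¹ • innerSL ℝ Z) Z := by
  have h := (hasStrictFDerivAt_norm_sq Z).hasFDerivAt
  have h0 : ‖Z‖ ≠ 0 := norm_ne_zero_iff.2 hZ
  have h1 := h.sqrt (by positivity)
  simp only [Real.sqrt_sq (norm_nonneg _)] at h1
  refine h1.congr_fderiv ?_
  ext v
  simp
  field_simp

theorem SS_hasFDerivAt (g : ℝ → ℝ) (hd : ContDiff ℝ 1 (deriv g)) (hkc : Continuous (kk g))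
    (hkm : ∀ t, deriv g t = t * kk g t) (Z : E2) : HasFDerivAt (SS g) (AA g Z) Z := by
  by_cases hZ : Z = 0
  · subst hZ
    have : AA g 0 = kk g 0 • ContinuousLinearMap.id ℝ E2 := by
      ext v : 1
      simp [AA]
    rw [this]
    rw [hasFDerivAt_iff_isLittleO_nhds_zero]
    simp only [zero_add, SS, norm_zero, smul_zero, sub_zero]
    have h1 : (fun h : E2 => kk g ‖h‖ • h - (kk g 0 • ContinuousLinearMap.id ℝ E2) h) =
        fun h : E2 => (kk g ‖h‖ - kk g 0) • h := by
      funext h; simp [sub_smul]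
    rw [h1]
    have h2 : Tendsto (fun h : E2 => kk g ‖h‖ - kk g 0) (𝓝 0) (𝓝 0) := by
      have : Continuous (fun h : E2 => kk g ‖h‖ - kk g 0) := (hkc.comp continuous_norm).sub continuous_const
      simpa using this.tendsto 0
    have h3 := ((Asymptotics.isLittleO_one_iff ℝ).2 h2).smul_isBigO (Asymptotics.isBigO_refl (fun h : E2 => h) (𝓝 0))
    simpa using h3
  · have h0 : ‖Z‖ ≠ 0 := norm_ne_zero_iff.2 hZ
    have hkd : HasDerivAt (kk g) ((deriv (deriv g) ‖Z‖ - kk g ‖Z‖) / ‖Z‖) ‖Z‖ := by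
      have h1 := ((hd.differentiable (by norm_num)) ‖Z‖).hasDerivAt.div (hasDerivAt_id _) h0
      have h2 : HasDerivAt (kk g) ((deriv (deriv g) ‖Z‖ * ‖Z‖ - deriv g ‖Z‖ * 1) / ‖Z‖ ^ 2) ‖Z‖ := by
        refine h1.congr_of_eventuallyEq ?_
        filter_upwards [isOpen_ne.mem_nhds h0] with t ht
        simp only [Pi.div_apply, id]
        rw [hkm t]; field_simp
      refine h2.congr_deriv ?_
      rw [hkm]; field_simp
    have h1 := hkd.comp_hasFDerivAt Z (norm_hasFDerivAt hZ)
    have h2 := h1.smul (hasFDerivAt_id Z)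
    refine h2.congr_fderiv ?_
    ext v : 1
    simp only [AA, mm, ContinuousLinearMap.add_apply, ContinuousLinearMap.smul_apply,
      ContinuousLinearMap.smulRight_apply, ContinuousLinearMap.id_apply, Function.comp, id, smul_smul, innerSL_apply_apply]
    congr 2
    simp only [smul_eq_mul]
    field_simp

theorem AA_continuous (g : ℝ → ℝ) (hd : ContDiff ℝ 1 (deriv g)) (hkc : Continuous (kk g))
    (hk0 : kk g 0 = deriv (deriv g) 0) : Continuous (AA g) := by
  have hdd : Continuous (deriv (deriv g)) := hd.continuous_deriv (by norm_num)
  apply Continuous.add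
  · exact (hkc.comp continuous_norm).smul continuous_const
  rw [continuous_iff_continuousAt]
  intro Z
  by_cases hZ : Z = 0
  · subst hZ
    unfold ContinuousAt
    simp only [map_zero, smul_zero, norm_zero, ContinuousLinearMap.smulRight_zero]
    have hb : Tendsto (fun Z : E2 => |deriv (deriv g) ‖Z‖ - kk g ‖Z‖|) (𝓝 0) (𝓝 0) := by
      have : Continuous (fun Z : E2 => |deriv (deriv g) ‖Z‖ - kk g ‖Z‖|) :=
        ((hdd.comp continuous_norm).sub (hkc.comp continuous_norm)).abs
      have := this.tendsto 0
      simpa [hk0] using this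
    apply squeeze_zero_norm _ hb
    intro Z
    rw [norm_smul, ContinuousLinearMap.norm_smulRight_apply, innerSL_apply_norm, mm, Real.norm_eq_abs, abs_div]
    by_cases hZ : Z = 0
    · subst hZ; simp
    · have h0 : ‖Z‖ ≠ 0 := norm_ne_zero_iff.2 hZ
      rw [abs_of_nonneg (by positivity : 0 ≤ ‖Z‖ ^ 2)]
      apply le_of_eq; field_simp
  · have h0 : ‖Z‖ ≠ 0 := norm_ne_zero_iff.2 hZ
    refine ContinuousAt.fun_smul ?_ ?_
    · unfold mm
      refine ContinuousAt.div (f := fun Z : E2 => deriv (deriv g) ‖Z‖ - kk g ‖Z‖) (g := fun Z : E2 => ‖Z‖ ^ 2) ?_ ?_ (by positivity)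
      · exact ((hdd.comp continuous_norm).sub (hkc.comp continuous_norm)).continuousAt
      · fun_prop
    · have : Continuous (fun Z : E2 => (innerSL ℝ Z).smulRight Z) := by
        have h2 : Continuous fun Z : E2 => (ContinuousLinearMap.smulRightL ℝ E2 E2 (innerSL ℝ Z)) Z := by fun_prop
        exact h2
      exact this.continuousAt

theorem F_grad (g : ℝ → ℝ) (hg : ContDiff ℝ 2 g) (hkm : ∀ t, deriv g t = t * kk g t) (Z : E2) :
    HasGradientAt (fun Z : E2 => g ‖Z‖) (SS g Z) Z := by
  rw [hasGradientAt_iff_hasFDerivAt]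
  have hgd := hg.differentiable (by norm_num)
  by_cases hZ : Z = 0
  · subst hZ
    have h0 : HasDerivAt g 0 0 := by
      have := (hgd 0).hasDerivAt
      rwa [hkm 0, zero_mul] at this
    simp only [SS, smul_zero, map_zero]
    rw [hasFDerivAt_iff_isLittleO_nhds_zero]
    rw [hasDerivAt_iff_isLittleO_nhds_zero] at h0
    simp only [zero_add, smul_zero, sub_zero, norm_zero, ContinuousLinearMap.zero_apply] at h0 ⊢
    have ht : Tendsto (fun Z : E2 => ‖Z‖) (𝓝 0) (𝓝 0) := by simpa using (continuous_norm (E := E2)).tendsto 0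
    have := h0.comp_tendsto ht
    exact this.of_norm_right
  · have h1 := (hgd ‖Z‖).hasDerivAt.comp_hasFDerivAt Z (norm_hasFDerivAt hZ)
    have h0 : ‖Z‖ ≠ 0 := norm_ne_zero_iff.2 hZ
    refine h1.congr_fderiv ?_
    ext v
    simp [SS, hkm, inner_smul_left]
    field_simp

theorem poincare2 {b0 b1 : E2 → ℝ} (h0 : ContDiff ℝ 1 b0) (h1 : ContDiff ℝ 1 b1)
    (hcl : ∀ x, pd 1 b0 x = pd 0 b1 x) :
    ∃ P : E2 → ℝ, ContDiff ℝ 1 P ∧ (∀ x, pd 0 P x = b0 x) ∧ (∀ x, pd 1 P x = b1 x) := by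
  set p0 : E2 →L[ℝ] ℝ := EuclideanSpace.proj 0 with hp0
  set p1 : E2 →L[ℝ] ℝ := EuclideanSpace.proj 1 with hp1
  set ω : E2 → E2 →L[ℝ] ℝ := fun x => b0 x • p0 + b1 x • p1 with hω
  have e0 : ∀ v : E2, p0 v = v 0 := fun _ => rfl
  have e1 : ∀ v : E2, p1 v = v 1 := fun _ => rfl
  have hωd : ∀ x, HasFDerivAt ω ((fderiv ℝ b0 x).smulRight p0 + (fderiv ℝ b1 x).smulRight p1) x := by
    intro x
    exact ((h0.differentiable (by norm_num) x).hasFDerivAt.smul_const p0).add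
      ((h1.differentiable (by norm_num) x).hasFDerivAt.smul_const p1)
  obtain ⟨P, hP⟩ := (convex_univ (𝕜 := ℝ) (E := E2)).exists_forall_hasFDerivAt_of_fderiv_symmetric isOpen_univ
    (ω := ω) (fun x _ => (hωd x).differentiableAt.differentiableWithinAt) (by
      intro a _ x y
      rw [(hωd a).fderiv]
      simp only [ContinuousLinearMap.add_apply, ContinuousLinearMap.smulRight_apply,
        ContinuousLinearMap.smul_apply, smul_eq_mul, fderiv_apply_pd, e0, e1, hcl]
      ring)
  refine ⟨P, ?_, ?_, ?_⟩
  · rw [contDiff_one_iff_hasFDerivAt]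
    refine ⟨ω, ?_, fun x => hP x trivial⟩
    have := h0.continuous
    have := h1.continuous
    fun_prop
  · intro x
    unfold pd
    rw [(hP x trivial).fderiv]; simp [hω, e0, e1]
  · intro x
    unfold pd
    rw [(hP x trivial).fderiv]; simp [hω, e0, e1]

theorem expanding {P Q : E2 → ℝ} (hP : ContDiff ℝ 1 P) (hQ : ContDiff ℝ 1 Q)
    (hpos : ∀ x (a b : ℝ), a ^ 2 + b ^ 2 ≤
      a * (a * pd 0 P x + b * pd 1 P x) + b * (a * pd 0 Q x + b * pd 1 Q x)) (x y : E2) :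
    (x 0 - y 0) ^ 2 + (x 1 - y 1) ^ 2 ≤ (x 0 - y 0) * (P x - P y) + (x 1 - y 1) * (Q x - Q y) := by
  set a := x 0 - y 0 with ha
  set b := x 1 - y 1 with hb
  set f : ℝ → ℝ := fun τ => a * P (y + τ • (x - y)) + b * Q (y + τ • (x - y)) with hf
  have hline : ∀ τ : ℝ, HasDerivAt (fun τ : ℝ => y + τ • (x - y)) (x - y) τ := by
    intro τ
    simpa using ((hasDerivAt_id τ).smul_const (x - y)).const_add y
  have hder : ∀ τ, HasDerivAt f (a * (a * pd 0 P (y + τ • (x - y)) + b * pd 1 P (y + τ • (x - y)))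
      + b * (a * pd 0 Q (y + τ • (x - y)) + b * pd 1 Q (y + τ • (x - y)))) τ := by
    intro τ
    have h1 := ((hP.differentiable (by norm_num) (y + τ • (x - y))).hasFDerivAt.comp_hasDerivAt τ (hline τ)).const_mul a
    have h2 := ((hQ.differentiable (by norm_num) (y + τ • (x - y))).hasFDerivAt.comp_hasDerivAt τ (hline τ)).const_mul b
    have h3 := h1.add h2
    rw [fderiv_apply_pd, fderiv_apply_pd] at h3
    exact h3
  have := mul_sub_le_image_sub_of_le_deriv (f := f) (C := a ^ 2 + b ^ 2) (fun τ => (hder τ).differentiableAt)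
    (fun τ => by rw [(hder τ).deriv]; exact hpos _ a b) (x := 0) (y := 1) zero_le_one
  simp [hf] at this
  linarith

theorem pd_mul {f h : E2 → ℝ} (hf : ContDiff ℝ 1 f) (hh : ContDiff ℝ 1 h) (i : Fin 2) (x : E2) :
    pd i (fun y => f y * h y) x = pd i f x * h x + f x * pd i h x := by
  unfold pd
  have := ((hf.differentiable (by norm_num) x).hasFDerivAt.mul (hh.differentiable (by norm_num) x).hasFDerivAt).fderiv
  have e : (fun y => f y * h y) = f * h := rfl
  rw [e, this]
  simp
  ring

theorem pd_add {f h : E2 → ℝ} (hf : ContDiff ℝ 1 f) (hh : ContDiff ℝ 1 h) (i : Fin 2) (x : E2) :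
    pd i (fun y => f y + h y) x = pd i f x + pd i h x := by
  unfold pd
  have := ((hf.differentiable (by norm_num) x).hasFDerivAt.add (hh.differentiable (by norm_num) x).hasFDerivAt).fderiv
  have e : (fun y => f y + h y) = f + h := rfl
  rw [e, this]
  simp

theorem pd_sub {f h : E2 → ℝ} (hf : ContDiff ℝ 1 f) (hh : ContDiff ℝ 1 h) (i : Fin 2) (x : E2) :
    pd i (fun y => f y - h y) x = pd i f x - pd i h x := by
  unfold pd
  have := ((hf.differentiable (by norm_num) x).hasFDerivAt.sub (hh.differentiable (by norm_num) x).hasFDerivAt).fderiv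
  have e : (fun y => f y - h y) = f - h := rfl
  rw [e, this]
  simp

theorem pd_const (c : ℝ) (i : Fin 2) (x : E2) : pd i (fun _ => c) x = 0 := by
  unfold pd
  simp

theorem pd_scomp {f : E2 → ℝ} (hf : ContDiff ℝ 1 f) {q : ℝ → ℝ} {q' : ℝ} (i : Fin 2) (x : E2)
    (hq : HasDerivAt q q' (f x)) : pd i (fun y => q (f y)) x = q' * pd i f x := by
  unfold pd
  have := (hq.comp_hasFDerivAt x (hf.differentiable (by norm_num) x).hasFDerivAt).fderiv
  have e : (fun y => q (f y)) = q ∘ f := rfl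
  rw [e, this]
  simp

theorem pd_coord {Z : E2 → E2} {x : E2} {G : E2 →L[ℝ] E2} (hZ : HasFDerivAt Z G x) (i j : Fin 2) :
    pd i (fun y => Z y j) x = (G (EuclideanSpace.single i 1)) j := by
  unfold pd
  have := ((EuclideanSpace.proj (𝕜 := ℝ) j : E2 →L[ℝ] ℝ).hasFDerivAt.comp x hZ).fderiv
  have e : (fun y => Z y j) = (EuclideanSpace.proj (𝕜 := ℝ) j : E2 →L[ℝ] ℝ) ∘ Z := rfl
  rw [e, this]
  rfl

theorem weak_sum {σ Φ : Fin 2 → E2 → ℝ} (hσ : ∀ i, ContDiff ℝ 1 (σ i)) (hΦ : ∀ i, ContDiff ℝ 1 (Φ i))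
    (hdiv : ∀ x, pd 0 (σ 0) x + pd 1 (σ 1) x = 0) {ω : E2 → ℝ} (hω : ContDiff ℝ 1 ω)
    (hc : HasCompactSupport ω) :
    ∫ x, ω x * (pd 0 (σ 0) x * pd 0 (Φ 0) x + pd 0 (σ 1) x * pd 1 (Φ 0) x
        + pd 1 (σ 0) x * pd 0 (Φ 1) x + pd 1 (σ 1) x * pd 1 (Φ 1) x) =
    - ∫ x, ((Φ 0 x * pd 0 (σ 0) x + Φ 1 x * pd 1 (σ 0) x) * pd 0 ω x +
        (Φ 0 x * pd 0 (σ 1) x + Φ 1 x * pd 1 (σ 1) x) * pd 1 ω x) := by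
  have w0 := weak_lin hσ hdiv (hω.mul (hΦ 0)) hc.mul_right 0
  have w1 := weak_lin hσ hdiv (hω.mul (hΦ 1)) hc.mul_right 1
  have hps : ∀ i j, Continuous (pd i (σ j)) := fun i j => pd_continuous (hσ j) i
  have hpp : ∀ i j, Continuous (pd i (Φ j)) := fun i j => pd_continuous (hΦ j) i
  have hpw : ∀ i, Continuous (pd i ω) := fun i => pd_continuous hω i
  have hcp : ∀ i, HasCompactSupport (pd i ω) := fun i => pd_supp hc i
  have hΦc : ∀ i, Continuous (Φ i) := fun i => (hΦ i).continuous
  have hωc := hω.continuous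
  -- integrability of the elementary pieces
  have I1 : ∀ {f : E2 → ℝ}, Continuous f → Integrable (fun x => f x * ω x) := fun hf =>
    (hf.mul hωc).integrable_of_hasCompactSupport hc.mul_left
  have I2 : ∀ {f : E2 → ℝ} (i), Continuous f → Integrable (fun x => f x * pd i ω x) := fun i hf =>
    (hf.mul (hpw i)).integrable_of_hasCompactSupport (hcp i).mul_left
  have J : ∀ k, Integrable (fun x => pd k (σ 0) x * pd 0 (fun y => ω y * Φ k y) x
      + pd k (σ 1) x * pd 1 (fun y => ω y * Φ k y) x) := by
    intro k
    have e : (fun x => pd k (σ 0) x * pd 0 (fun y => ω y * Φ k y) x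
      + pd k (σ 1) x * pd 1 (fun y => ω y * Φ k y) x) =
      fun x => (pd k (σ 0) x * pd 0 (Φ k) x + pd k (σ 1) x * pd 1 (Φ k) x) * ω x +
        ((pd k (σ 0) x * Φ k x) * pd 0 ω x + (pd k (σ 1) x * Φ k x) * pd 1 ω x) := by
      funext x
      rw [pd_mul hω (hΦ k), pd_mul hω (hΦ k)]; ring
    rw [e]
    have c0 := hps k 0
    have c1 := hps k 1
    have c2 := hpp 0 k
    have c3 := hpp 1 k
    have c4 := hΦc k
    exact (I1 (by fun_prop)).add ((I2 0 (by fun_prop)).add (I2 1 (by fun_prop)))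
  have K1 : Integrable (fun x => ω x * (pd 0 (σ 0) x * pd 0 (Φ 0) x + pd 0 (σ 1) x * pd 1 (Φ 0) x
        + pd 1 (σ 0) x * pd 0 (Φ 1) x + pd 1 (σ 1) x * pd 1 (Φ 1) x)) := by
    simp only [mul_comm (ω _)]
    apply I1
    exact ((((hps 0 0).mul (hpp 0 0)).add ((hps 0 1).mul (hpp 1 0))).add ((hps 1 0).mul (hpp 0 1))).add
      ((hps 1 1).mul (hpp 1 1))
  have K2 : Integrable (fun x => ((Φ 0 x * pd 0 (σ 0) x + Φ 1 x * pd 1 (σ 0) x) * pd 0 ω x +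
        (Φ 0 x * pd 0 (σ 1) x + Φ 1 x * pd 1 (σ 1) x) * pd 1 ω x)) := by
    refine (I2 0 ?_).add (I2 1 ?_)
    · exact ((hΦc 0).mul (hps 0 0)).add ((hΦc 1).mul (hps 1 0))
    · exact ((hΦc 0).mul (hps 0 1)).add ((hΦc 1).mul (hps 1 1))
  rw [eq_neg_iff_add_eq_zero, ← integral_add K1 K2]
  have w2 := integral_add (J 0) (J 1)
  have w0' : ∫ x, (pd 0 (σ 0) x * pd 0 (fun y => ω y * Φ 0 y) x
      + pd 0 (σ 1) x * pd 1 (fun y => ω y * Φ 0 y) x) = 0 := w0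
  have w1' : ∫ x, (pd 1 (σ 0) x * pd 0 (fun y => ω y * Φ 1 y) x
      + pd 1 (σ 1) x * pd 1 (fun y => ω y * Φ 1 y) x) = 0 := w1
  rw [w0', w1', add_zero] at w2
  rw [← w2]
  congr 1
  funext x
  simp only [pd_mul hω (hΦ 0), pd_mul hω (hΦ 1)]
  ring

theorem grad_coord (u : E2 → ℝ) (x : E2) (i : Fin 2) : gradient u x i = pd i u x := by
  unfold pd
  have h : inner ℝ (gradient u x) (EuclideanSpace.single i (1:ℝ)) = fderiv ℝ u x (EuclideanSpace.single i 1) := by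
    simp [gradient]
  rw [EuclideanSpace.inner_single_right] at h
  simpa using h

theorem grad_contDiff {u : E2 → ℝ} (hu : ContDiff ℝ 2 u) : ContDiff ℝ 1 (gradient u) := by
  have h1 : ContDiff ℝ 1 (fderiv ℝ u) := hu.fderiv_right (by norm_num)
  exact (InnerProductSpace.toDual ℝ E2).symm.toContinuousLinearEquiv.contDiff.comp h1

theorem pd_symm {u : E2 → ℝ} (hu : ContDiff ℝ 2 u) (x : E2) :
    pd 0 (fun y => gradient u y 1) x = pd 1 (fun y => gradient u y 0) x := by
  have h1 : ContDiff ℝ 1 (fderiv ℝ u) := hu.fderiv_right (by norm_num)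
  have hs : IsSymmSndFDerivAt ℝ u x := hu.contDiffAt.isSymmSndFDerivAt (by simp)
  simp only [grad_coord]
  have key : ∀ i j : Fin 2, pd i (fun y => pd j u y) x =
      fderiv ℝ (fderiv ℝ u) x (EuclideanSpace.single i 1) (EuclideanSpace.single j 1) := by
    intro i j
    unfold pd
    have := ((h1.differentiable (by norm_num) x).hasFDerivAt.clm_apply
      (hasFDerivAt_const (EuclideanSpace.single j (1:ℝ)) x)).fderiv
    rw [this]
    simp
  rw [key, key]
  exact hs _ _

theorem SS_contDiff (g : ℝ → ℝ) (hd : ContDiff ℝ 1 (deriv g)) (hkc : Continuous (kk g))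
    (hkm : ∀ t, deriv g t = t * kk g t) (hk0 : kk g 0 = deriv (deriv g) 0) : ContDiff ℝ 1 (SS g) := by
  rw [contDiff_one_iff_hasFDerivAt]
  exact ⟨AA g, AA_continuous g hd hkc hk0, SS_hasFDerivAt g hd hkc hkm⟩

theorem gn_contDiff (g : ℝ → ℝ) (hg : ContDiff ℝ 2 g) (hkc : Continuous (kk g))
    (hkm : ∀ t, deriv g t = t * kk g t) : ContDiff ℝ 1 (fun Z : E2 => g ‖Z‖) := by
  rw [contDiff_one_iff_hasFDerivAt]
  refine ⟨fun Z => InnerProductSpace.toDual ℝ E2 (SS g Z), ?_, fun Z => (F_grad g hg hkm Z).hasFDerivAt⟩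
  have : Continuous (SS g) := (hkc.comp continuous_norm).smul continuous_id
  fun_prop

theorem inner_E2 (x y : E2) : inner ℝ x y = x 0 * y 0 + x 1 * y 1 := by
  simp [PiLp.inner_apply, Fin.sum_univ_two, mul_comm]

theorem const_of_pd {f : E2 → ℝ} (hf : ContDiff ℝ 1 f) (h0 : ∀ x, pd 0 f x = 0) (h1 : ∀ x, pd 1 f x = 0)
    (x y : E2) : f x = f y := by
  refine is_const_of_fderiv_eq_zero (𝕜 := ℝ) (hf.differentiable (by norm_num)) ?_ x y
  intro z
  ext v
  rw [fderiv_apply_pd, h0, h1]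
  simp

theorem affine_of_const {u : E2 → ℝ} (hu : ContDiff ℝ 2 u) (A : E2) (hA : ∀ x, gradient u x = A) :
    ∃ (A : E2) (a : ℝ), ∀ x, u x = (∑ α : Fin 2, A α * x α) + a := by
  refine ⟨A, u 0, fun x => ?_⟩
  have hu1 : ContDiff ℝ 1 u := hu.of_le (by norm_num)
  set ℓ : E2 →L[ℝ] ℝ := innerSL ℝ A with hl
  have hpl : ∀ i x, pd i ℓ x = A i := by
    intro i x
    unfold pd
    rw [ℓ.fderiv, hl, innerSL_apply_apply, EuclideanSpace.inner_single_right]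
    simp
  have hc : ∀ i x, pd i (fun y => u y - ℓ y) x = 0 := by
    intro i x
    rw [pd_sub hu1 ℓ.contDiff, hpl, ← grad_coord, hA, sub_self]
  have := const_of_pd (hu1.sub ℓ.contDiff) (hc 0) (hc 1) x 0
  simp only [map_zero, sub_zero, hl, innerSL_apply_apply, inner_E2] at this
  rw [Fin.sum_univ_two]
  linarith

set_option maxHeartbeats 2000000 in
theorem main_thm (g : ℝ → ℝ) (hg : ContDiff ℝ 2 g)
    (a₅ μ : ℝ) (ha₅ : 0 < a₅) (hμ : 3 ≤ μ)
    (hg'0 : deriv g 0 = 0)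
    (hg'' : ∀ t : ℝ, 0 < t → 0 < deriv (deriv g) t)
    (hell : ∀ t : ℝ, 0 ≤ t → deriv (deriv g) t ≤ a₅ * (1 + t) ^ (-μ))
    (u : E2 → ℝ) (hu : ContDiff ℝ 2 u)
    (heuler : ∀ x, pd 0 (fun y => SS g (gradient u y) 0) x + pd 1 (fun y => SS g (gradient u y) 1) x = 0) :
    ∃ (A : E2) (a : ℝ), ∀ x, u x = (∑ α : Fin 2, A α * x α) + a := by
  obtain ⟨hd, hkc, hkm, hk0, hknn, hkpos, hlnn, hkb, hlb, hhb⟩ := one_d g hg a₅ μ ha₅ hμ hg'0 hg'' hell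
  set Zv : E2 → E2 := gradient u with hZv
  have hZ1 : ContDiff ℝ 1 Zv := grad_contDiff hu
  have hZd : ∀ x, HasFDerivAt Zv (fderiv ℝ Zv x) x := fun x => (hZ1.differentiable (by norm_num) x).hasFDerivAt
  set Z : Fin 2 → E2 → ℝ := fun i x => Zv x i with hZ
  have hZc : ∀ i, ContDiff ℝ 1 (Z i) := fun i => 
    (EuclideanSpace.proj (𝕜 := ℝ) i : E2 →L[ℝ] ℝ).contDiff.comp hZ1
  set σ : Fin 2 → E2 → ℝ := fun i x => SS g (Zv x) i with hσ
  have hSc := SS_contDiff g hd hkc hkm hk0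
  have hσc : ∀ i, ContDiff ℝ 1 (σ i) := fun i =>
    (EuclideanSpace.proj (𝕜 := ℝ) i : E2 →L[ℝ] ℝ).contDiff.comp (hSc.comp hZ1)
  set k : E2 → ℝ := fun x => kk g ‖Zv x‖ with hk
  set m : E2 → ℝ := fun x => mm g ‖Zv x‖ with hm
  set l : E2 → ℝ := fun x => deriv (deriv g) ‖Zv x‖ with hl
  have hnZ : ∀ x, ‖Zv x‖ ^ 2 = Z 0 x ^ 2 + Z 1 x ^ 2 := fun x => norm_sq_E2 (Zv x)
  have hσZ : ∀ i x, σ i x = k x * Z i x := by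
    intro i x; simp [hσ, hk, hZ, SS]
  have hlk : ∀ x, l x = k x + m x * (Z 0 x ^ 2 + Z 1 x ^ 2) := by
    intro x
    rw [← hnZ]
    by_cases h : ‖Zv x‖ = 0
    · simp only [hl, hk, h, hk0]; simp
    · simp only [hl, hk, hm, mm]; field_simp; ring
  have hS : ∀ i j x, pd i (σ j) x = k x * pd i (Z j) x +
      m x * (pd i (Z 0) x * Z 0 x + pd i (Z 1) x * Z 1 x) * Z j x := by
    intro i j x
    have h1 := pd_coord ((SS_hasFDerivAt g hd hkc hkm (Zv x)).comp x (hZd x)) i j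
    have h2 : ∀ j, pd i (Z j) x = (fderiv ℝ Zv x (EuclideanSpace.single i 1)) j := fun j => pd_coord (hZd x) i j
    have h3 : pd i (σ j) x = _ := h1
    rw [h3, h2, h2, h2]
    simp only [AA, ContinuousLinearMap.comp_apply, ContinuousLinearMap.add_apply, ContinuousLinearMap.smul_apply,
      ContinuousLinearMap.smulRight_apply, ContinuousLinearMap.id_apply, innerSL_apply_apply, inner_E2,
      PiLp.add_apply, PiLp.smul_apply, smul_eq_mul, hk, hm, hZ]
    ring
  have hsym : ∀ x, pd 0 (Z 1) x = pd 1 (Z 0) x := fun x => pd_symm hu x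
  -- the function `h`
  set gn : E2 → ℝ := fun x => g ‖Zv x‖ with hgn
  have hgnc : ContDiff ℝ 1 gn := (gn_contDiff g hg hkc hkm).comp hZ1
  have hgnd : ∀ i x, pd i gn x = σ 0 x * pd i (Z 0) x + σ 1 x * pd i (Z 1) x := by
    intro i x
    have h1 := ((F_grad g hg hkm (Zv x)).hasFDerivAt.comp x (hZd x)).fderiv
    have h2 : ∀ j, pd i (Z j) x = (fderiv ℝ Zv x (EuclideanSpace.single i 1)) j := fun j => pd_coord (hZd x) i j
    have h3 : pd i gn x = (fderiv ℝ ((fun Z : E2 => g ‖Z‖) ∘ Zv) x) (EuclideanSpace.single i 1) := rfl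
    rw [h3, h1, h2, h2]
    simp only [ContinuousLinearMap.comp_apply, InnerProductSpace.toDual_apply_apply, inner_E2]
    rfl
  set h : E2 → ℝ := fun x => gn x - (σ 0 x * Z 0 x + σ 1 x * Z 1 x) + (- g 0 + a₅ + 1) with hh
  have hsz : ContDiff ℝ 1 (fun x => σ 0 x * Z 0 x + σ 1 x * Z 1 x) :=
    ((hσc 0).mul (hZc 0)).add ((hσc 1).mul (hZc 1))
  have hhc : ContDiff ℝ 1 h := (hgnc.sub hsz).add contDiff_const
  have hhd : ∀ i x, pd i h x = -(Z 0 x * pd i (σ 0) x + Z 1 x * pd i (σ 1) x) := by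
    intro i x
    rw [hh, pd_add (hgnc.sub hsz) contDiff_const, pd_const, pd_sub hgnc hsz, hgnd,
      pd_add ((hσc 0).mul (hZc 0)) ((hσc 1).mul (hZc 1)), pd_mul (hσc 0) (hZc 0), pd_mul (hσc 1) (hZc 1)]
    ring
  have hkZ : ∀ x, σ 0 x * Z 0 x + σ 1 x * Z 1 x = ‖Zv x‖ * deriv g ‖Zv x‖ := by
    intro x
    rw [hσZ, hσZ, hkm]
    have := hnZ x
    simp only [hk]
    linear_combination (-kk g ‖Zv x‖) * this
  have hh1 : ∀ x, 1 ≤ h x ∧ h x ≤ 1 + a₅ := by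
    intro x
    have := hhb ‖Zv x‖ (norm_nonneg _)
    simp only [hh, hkZ, hgn]
    constructor <;> linarith [this.1, this.2]
  -- the map Λ
  obtain ⟨P, hP, hP0, hP1⟩ := poincare2 (b0 := fun x => h x + σ 0 x * Z 0 x) (b1 := fun x => σ 0 x * Z 1 x)
    (hhc.add ((hσc 0).mul (hZc 0))) ((hσc 0).mul (hZc 1)) (by
      intro x
      rw [pd_add hhc ((hσc 0).mul (hZc 0)), pd_mul (hσc 0) (hZc 0), pd_mul (hσc 0) (hZc 1), hhd]
      linear_combination (-Z 1 x) * heuler x - σ 0 x * hsym x)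
  obtain ⟨Q, hQ, hQ0, hQ1⟩ := poincare2 (b0 := fun x => σ 1 x * Z 0 x) (b1 := fun x => h x + σ 1 x * Z 1 x)
    ((hσc 1).mul (hZc 0)) (hhc.add ((hσc 1).mul (hZc 1))) (by
      intro x
      rw [pd_add hhc ((hσc 1).mul (hZc 1)), pd_mul (hσc 1) (hZc 0), pd_mul (hσc 1) (hZc 1), hhd]
      linear_combination (Z 0 x) * heuler x - σ 1 x * hsym x)
  -- Φ
  set w : E2 → ℝ := fun x => Real.sqrt (1 + (Z 0 x * Z 0 x + Z 1 x * Z 1 x)) with hw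
  have hqc : ContDiff ℝ 1 (fun x => 1 + (Z 0 x * Z 0 x + Z 1 x * Z 1 x)) :=
    contDiff_const.add (((hZc 0).mul (hZc 0)).add ((hZc 1).mul (hZc 1)))
  have hqpos : ∀ x, 1 ≤ 1 + (Z 0 x * Z 0 x + Z 1 x * Z 1 x) := fun x => by
    nlinarith [mul_self_nonneg (Z 0 x), mul_self_nonneg (Z 1 x)]
  have hqne : ∀ x, 1 + (Z 0 x * Z 0 x + Z 1 x * Z 1 x) ≠ 0 := fun x => by linarith [hqpos x]
  have hwc : ContDiff ℝ 1 w := hqc.sqrt hqne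
  have hw1 : ∀ x, 1 ≤ w x := fun x => Real.one_le_sqrt.2 (hqpos x)
  have hw2 : ∀ x, w x ^ 2 = 1 + (Z 0 x ^ 2 + Z 1 x ^ 2) := fun x => by
    simp only [hw]; rw [Real.sq_sqrt (by linarith [hqpos x])]; ring
  have hwd : ∀ i x, pd i w x = (pd i (Z 0) x * Z 0 x + pd i (Z 1) x * Z 1 x) / w x := by
    intro i x
    have hz2 : ContDiff ℝ 1 (fun x => Z 0 x * Z 0 x + Z 1 x * Z 1 x) := ((hZc 0).mul (hZc 0)).add ((hZc 1).mul (hZc 1))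
    have h1 := pd_scomp hqc i x (Real.hasDerivAt_sqrt (hqne x))
    have h2 : pd i w x = _ := h1
    rw [h2, pd_add contDiff_const hz2, pd_const, 
      pd_add ((hZc 0).mul (hZc 0)) ((hZc 1).mul (hZc 1)), pd_mul (hZc 0) (hZc 0), pd_mul (hZc 1) (hZc 1)]
    have : w x ≠ 0 := by linarith [hw1 x]
    change 1 / (2 * w x) * _ = _
    field_simp
    ring
  set mp : E2 → ℝ := fun x => 1 / (1 + w x) with hmp
  have hw1ne : ∀ x, 1 + w x ≠ 0 := fun x => by linarith [hw1 x]
  have hmpc : ContDiff ℝ 1 mp := contDiff_const.div (contDiff_const.add hwc) hw1ne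
  have hmpd : ∀ i x, pd i mp x = -(1 / (w x * (1 + w x) ^ 2)) * (pd i (Z 0) x * Z 0 x + pd i (Z 1) x * Z 1 x) := by
    intro i x
    have hq : HasDerivAt (fun s : ℝ => 1 / (1 + s)) (-1 / (1 + w x) ^ 2) (w x) := by
      have h1 : HasDerivAt (fun s : ℝ => 1 + s) 1 (w x) := by simpa using (hasDerivAt_id (w x)).const_add 1
      have := h1.inv (hw1ne x)
      simp only [one_div]
      exact this
    have h1 := pd_scomp hwc i x hq
    have h2 : pd i mp x = _ := h1
    rw [h2, hwd]
    have : w x ≠ 0 := by linarith [hw1 x]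
    have := hw1ne x
    field_simp
  set Φ : Fin 2 → E2 → ℝ := fun i x => mp x * Z i x with hΦ
  have hΦc : ∀ i, ContDiff ℝ 1 (Φ i) := fun i => hmpc.mul (hZc i)
  have hΦd : ∀ i j x, pd i (Φ j) x = mp x * pd i (Z j) x - 
      (1 / (w x * (1 + w x) ^ 2)) * (pd i (Z 0) x * Z 0 x + pd i (Z 1) x * Z 1 x) * Z j x := by
    intro i j x
    rw [hΦ, pd_mul hmpc (hZc j), hmpd]; ring
  -- bounds
  set C : ℝ := (1 + a₅) ^ 2 with hC
  have hC0 : 0 ≤ C := by positivity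
  set Ft : E2 → ℝ := fun x => h x + k x * (Z 0 x ^ 2 + Z 1 x ^ 2) with hFt
  have hk_nn : ∀ x, 0 ≤ k x := fun x => hknn _ (norm_nonneg _)
  have hl_nn : ∀ x, 0 ≤ l x := fun x => hlnn _ (norm_nonneg _)
  have hFh : ∀ x, h x ≤ Ft x := fun x => by
    have : 0 ≤ k x * (Z 0 x ^ 2 + Z 1 x ^ 2) := mul_nonneg (hk_nn x) (by positivity)
    simp only [hFt]; linarith
  have hb1 : ∀ x, l x * Ft x * w x ^ 2 ≤ C * h x := by
    intro x
    have e1 := hkb ‖Zv x‖ (norm_nonneg _)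
    have e2 := hlb ‖Zv x‖ (norm_nonneg _)
    have e3 := hh1 x
    have e4 := hl_nn x
    have e5 := hk_nn x
    have t0 := norm_nonneg (Zv x)
    have hF1 : Ft x ≤ (1 + a₅) * (1 + ‖Zv x‖) := by
      simp only [hFt]; rw [← hnZ]
      have : k x * ‖Zv x‖ ^ 2 ≤ a₅ * ‖Zv x‖ := by
        have : k x * (1 + ‖Zv x‖) * ‖Zv x‖ ≤ a₅ * ‖Zv x‖ := mul_le_mul_of_nonneg_right e1 t0
        nlinarith [mul_nonneg e5 t0]
      nlinarith [e3.2]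
    have hw3 : w x ^ 2 ≤ (1 + ‖Zv x‖) ^ 2 := by
      rw [hw2, ← hnZ]; nlinarith
    have hF0 : 0 ≤ Ft x := by linarith [hFh x]
    calc l x * Ft x * w x ^ 2 ≤ l x * ((1 + a₅) * (1 + ‖Zv x‖)) * (1 + ‖Zv x‖) ^ 2 := by gcongr
      _ = (l x * (1 + ‖Zv x‖) ^ 3) * (1 + a₅) := by ring
      _ ≤ a₅ * (1 + a₅) := mul_le_mul_of_nonneg_right e2 (by positivity)
      _ ≤ C * 1 := by rw [hC]; nlinarith
      _ ≤ C * h x := mul_le_mul_of_nonneg_left e3.1 hC0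
  have hb2 : ∀ x, h x * k x * w x ^ 2 ≤ C * Ft x := by
    intro x
    have e1 := hkb ‖Zv x‖ (norm_nonneg _)
    have e3 := hh1 x
    have e5 := hk_nn x
    have t0 := norm_nonneg (Zv x)
    have hka : k x ≤ a₅ := by
      have : k x * (1 + ‖Zv x‖) ≤ a₅ := e1
      nlinarith [mul_nonneg e5 t0]
    have hkw : k x * w x ^ 2 ≤ (1 + a₅) * Ft x := by
      have : k x * w x ^ 2 = k x + k x * (Z 0 x ^ 2 + Z 1 x ^ 2) := by rw [hw2]; ring
      have h2 : Ft x = h x + k x * (Z 0 x ^ 2 + Z 1 x ^ 2) := rfl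
      have h3 := hFh x
      nlinarith [e3.1]
    calc h x * k x * w x ^ 2 = h x * (k x * w x ^ 2) := by ring
      _ ≤ (1 + a₅) * ((1 + a₅) * Ft x) := by
          apply mul_le_mul e3.2 hkw (by positivity) (by positivity)
      _ = C * Ft x := by rw [hC]; ring
  set Lf : E2 → ℝ := fun x => pd 0 (σ 0) x * pd 0 (Φ 0) x + pd 0 (σ 1) x * pd 1 (Φ 0) x
        + pd 1 (σ 0) x * pd 0 (Φ 1) x + pd 1 (σ 1) x * pd 1 (Φ 1) x with hLf
  set X0 : E2 → ℝ := fun x => Φ 0 x * pd 0 (σ 0) x + Φ 1 x * pd 1 (σ 0) x with hX0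
  set X1 : E2 → ℝ := fun x => Φ 0 x * pd 0 (σ 1) x + Φ 1 x * pd 1 (σ 1) x with hX1
  have hps : ∀ i j, Continuous (pd i (σ j)) := fun i j => pd_continuous (hσc j) i
  have hpp : ∀ i j, Continuous (pd i (Φ j)) := fun i j => pd_continuous (hΦc j) i
  have hΦcc : ∀ i, Continuous (Φ i) := fun i => (hΦc i).continuous
  have hLc : Continuous Lf := ((((hps 0 0).mul (hpp 0 0)).add ((hps 0 1).mul (hpp 1 0))).add
    ((hps 1 0).mul (hpp 0 1))).add ((hps 1 1).mul (hpp 1 1))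
  have hX0c : Continuous X0 := ((hΦcc 0).mul (hps 0 0)).add ((hΦcc 1).mul (hps 1 0))
  have hX1c : Continuous X1 := ((hΦcc 0).mul (hps 0 1)).add ((hΦcc 1).mul (hps 1 1))
  have alg := fun x => alg_main (Z 0 x) (Z 1 x) (pd 0 (Z 0) x) (pd 1 (Z 0) x) (pd 1 (Z 1) x)
    (k x) (m x) (l x) (w x) (h x) (Ft x) C (mp x) (1 / (w x * (1 + w x) ^ 2)) (hlk x) (hk_nn x) (hl_nn x)
    (hw1 x) (hw2 x) rfl rfl (hh1 x).1 rfl hC0 (hb1 x) (hb2 x)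
    (pd 0 (σ 0) x) (pd 0 (σ 1) x) (pd 1 (σ 0) x) (pd 1 (σ 1) x)
    (by rw [hS, hsym]) (by rw [hS, hsym]) (by rw [hS]) (by rw [hS])
    (Lf x) (by simp only [hLf, hΦd, hsym]) (X0 x) (X1 x)
    (by simp only [hX0, hΦ]; ring) (by simp only [hX1, hΦ]; ring)
  have hdet : ∀ x, pd 0 P x * pd 1 Q x - pd 1 P x * pd 0 Q x = Ft x * h x := by
    intro x
    rw [hP0, hP1, hQ0, hQ1]
    simp only [hFt, hσZ]; ring
  have hL := core (P := P) (Q := Q) (L := Lf) (X0 := X0) (X1 := X1) (C := C) hP hQ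
    (expanding hP hQ (by
      intro x a b
      rw [hP0, hP1, hQ0, hQ1]
      simp only [hσZ]
      have e1 := (hh1 x).1
      have e2 := hk_nn x
      have e3 : 0 ≤ k x * (a * Z 0 x + b * Z 1 x) ^ 2 := by positivity
      have e4 : 0 ≤ (h x - 1) * (a ^ 2 + b ^ 2) := mul_nonneg (by linarith) (by positivity)
      nlinarith))
    (by
      intro x
      rw [hdet]
      have := (hh1 x).1
      have := hFh x
      exact mul_nonneg (by linarith) (by linarith))
    hLc (fun x => (alg x).1) hX0c hX1c
    (fun ω hω hc => weak_sum hσc hΦc heuler hω hc) hC0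
    (by
      intro x
      rw [hdet]
      have := (alg x).2.1
      rw [hP0, hP1, hQ0, hQ1]
      simp only [hσZ]
      convert this using 3 <;> ring)
  -- conclusion
  have hpos : ∀ x, 0 < Z 0 x ^ 2 + Z 1 x ^ 2 → 0 < k x ∧ 0 < l x := by
    intro x hx
    rw [← hnZ] at hx
    have : 0 < ‖Zv x‖ := by
      rcases (norm_nonneg (Zv x)).eq_or_lt with h | h
      · rw [← h] at hx; simp at hx
      · exact h
    exact ⟨hkpos _ this, hg'' _ this⟩
  have hzero : ∀ x, ¬ 0 < Z 0 x ^ 2 + Z 1 x ^ 2 → Z 0 x = 0 ∧ Z 1 x = 0 := by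
    intro x hx
    constructor <;> nlinarith [sq_nonneg (Z 0 x), sq_nonneg (Z 1 x)]
  have hHZ : ∀ x, pd 0 (Z 0) x * Z 0 x + pd 1 (Z 0) x * Z 1 x = 0 ∧
      pd 1 (Z 0) x * Z 0 x + pd 1 (Z 1) x * Z 1 x = 0 := by
    intro x
    by_cases hx : 0 < Z 0 x ^ 2 + Z 1 x ^ 2
    · have := (alg x).2.2 (hL x) (hpos x hx).1 (hpos x hx).2
      exact ⟨this.1, this.2.1⟩
    · obtain ⟨h0, h1⟩ := hzero x hx
      rw [h0, h1]; simp
  have hz2c : ContDiff ℝ 1 (fun x => Z 0 x * Z 0 x + Z 1 x * Z 1 x) := ((hZc 0).mul (hZc 0)).add ((hZc 1).mul (hZc 1))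
  have hz2d : ∀ i x, pd i (fun x => Z 0 x * Z 0 x + Z 1 x * Z 1 x) x =
      2 * (pd i (Z 0) x * Z 0 x + pd i (Z 1) x * Z 1 x) := by
    intro i x
    rw [pd_add ((hZc 0).mul (hZc 0)) ((hZc 1).mul (hZc 1)), pd_mul (hZc 0) (hZc 0), pd_mul (hZc 1) (hZc 1)]
    ring
  have hconst := const_of_pd hz2c (fun x => by rw [hz2d, hsym, (hHZ x).1, mul_zero])
    (fun x => by rw [hz2d, (hHZ x).2, mul_zero])
  apply affine_of_const hu (Zv 0)
  intro x
  have hZeq : Z 0 x = Z 0 0 ∧ Z 1 x = Z 1 0 := by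
    by_cases h0 : 0 < Z 0 0 ^ 2 + Z 1 0 ^ 2
    · have hall : ∀ y, pd 0 (Z 0) y = 0 ∧ pd 1 (Z 0) y = 0 ∧ pd 1 (Z 1) y = 0 := by
        intro y
        have hy : 0 < Z 0 y ^ 2 + Z 1 y ^ 2 := by
          have := hconst y 0
          nlinarith
        exact ((alg y).2.2 (hL y) (hpos y hy).1 (hpos y hy).2).2.2 hy
      exact ⟨const_of_pd (hZc 0) (fun y => (hall y).1) (fun y => (hall y).2.1) x 0,
        const_of_pd (hZc 1) (fun y => by rw [hsym]; exact (hall y).2.1) (fun y => (hall y).2.2) x 0⟩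
    · have hx : ¬ 0 < Z 0 x ^ 2 + Z 1 x ^ 2 := by
        have := hconst x 0
        intro h1
        apply h0
        nlinarith
      rw [(hzero x hx).1, (hzero x hx).2, (hzero 0 h0).1, (hzero 0 h0).2]
      exact ⟨rfl, rfl⟩
  change Zv x = Zv 0
  ext i
  fin_cases i
  · exact hZeq.1
  · exact hZeq.2

end

/-- Bernstein-type theorem.  If `g ∈ C²([0,∞))` satisfies `g'(0) = 0`,
`g'' > 0` on `(0,∞)`, the linear growth bounds `a₁t − a₂ ≤ g(t) ≤ a₃t + a₄`, and
`g''(t) ≤ a₅(1+t)^(−μ)` with `μ ≥ 3`, then every `C²` entire solution of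
`div[∇F(∇u)] = 0` with `F(Z) = g(|Z|)` is affine. -/
theorem statement3 (g : ℝ → ℝ) (hg : ContDiff ℝ 2 g)
    (a₁ a₂ a₃ a₄ a₅ μ : ℝ) (ha₁ : 0 < a₁) (ha₂ : 0 ≤ a₂) (ha₃ : 0 < a₃) (ha₄ : 0 ≤ a₄)
    (ha₅ : 0 < a₅) (hμ : 3 ≤ μ)
    (hg'0 : deriv g 0 = 0)
    (hg'' : ∀ t : ℝ, 0 < t → 0 < deriv (deriv g) t)
    (hgrow : ∀ t : ℝ, 0 ≤ t → a₁ * t - a₂ ≤ g t ∧ g t ≤ a₃ * t + a₄)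
    (hell : ∀ t : ℝ, 0 ≤ t → deriv (deriv g) t ≤ a₅ * (1 + t) ^ (-μ))
    (F : EuclideanSpace ℝ (Fin 2) → ℝ) (hFdef : ∀ Z, F Z = g ‖Z‖)
    (u : EuclideanSpace ℝ (Fin 2) → ℝ) (hu : ContDiff ℝ 2 u)
    (heuler : IsScalarEulerSolution F u) :
    ∃ (A : EuclideanSpace ℝ (Fin 2)) (a : ℝ),
      ∀ x, u x = (∑ α : Fin 2, A α * x α) + a := by
  have hFe : F = fun Z : E2 => g ‖Z‖ := funext hFdef
  obtain ⟨hd, hkc, hkm, -⟩ := one_d g hg a₅ μ ha₅ hμ hg'0 hg'' hell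
  have hgr : gradient F = SS g := by
    funext Z
    rw [hFe]
    exact (F_grad g hg hkm Z).gradient
  apply main_thm g hg a₅ μ ha₅ hμ hg'0 hg'' hell u hu
  intro x
  have h := heuler x
  rw [Fin.sum_univ_two, hgr] at h
  exact h
end

section
/- Let F ∈ C²(ℝ^(2N)) satisfy the μ-ellipticity lower bound λ(1+|Z|)^(−μ)|Y|² ≤ D²F(Z)(Y,Y) for all Y, Z ∈ ℝ^(2N), with λ > 0 and μ > 1, and set θ(r) := (λ/(μ−1))[1 − (1+r)^(1−μ)] for r ≥ 0. Then for every ε > 0 and every Z ∈ ℝ^(2N) one has |Z| ≤ ε + θ(ε)^(−1) · (∇F(Z) − ∇F(0)) : Z, where A : B denotes the Euclidean inner product of A, B ∈ ℝ^(2N). -/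
open scoped RealInnerProductSpace

theorem statement4_aux {E : Type*} [NormedAddCommGroup E] [NormedSpace ℝ E] (F : E → ℝ)
    (hF : ContDiff ℝ 2 F) (Z : E) (t : ℝ) :
    HasDerivAt (fun t : ℝ => fderiv ℝ F (t • Z) Z)
      (iteratedFDeriv ℝ 2 F (t • Z) ![Z, Z]) t := by
  have h1 : ContDiff ℝ 1 (fderiv ℝ F) := hF.fderiv_right (by norm_num)
  have h2 : HasFDerivAt (fderiv ℝ F) (fderiv ℝ (fderiv ℝ F) (t • Z)) (t • Z) :=
    (h1.differentiable (by norm_num) _).hasFDerivAt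
  have h3 : HasDerivAt (fun t : ℝ => t • Z) Z t := by
    simpa using (hasDerivAt_id t).smul_const Z
  have h5 : HasDerivAt (fun t : ℝ => fderiv ℝ F (t • Z))
      (fderiv ℝ (fderiv ℝ F) (t • Z) Z) t := h2.comp_hasDerivAt t h3
  have h4 := ((ContinuousLinearMap.apply ℝ ℝ Z).hasFDerivAt).comp_hasDerivAt t h5
  rw [iteratedFDeriv_two_apply]
  exact h4

/-- auxiliary Lemma: if `F ∈ C²(ℝ^{2N})` satisfies the `μ`-ellipticity
lower bound, and `θ(r) = (λ/(μ−1))[1 − (1+r)^{1−μ}]`, then for every `ε > 0` and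
every `Z` one has `|Z| ≤ ε + θ(ε)⁻¹ (∇F(Z) − ∇F(0)) : Z`. -/
theorem statement4 {N : ℕ} (F : EuclideanSpace ℝ (Fin N × Fin 2) → ℝ)
    (lam μ : ℝ) (hlam : 0 < lam) (hμ : 1 < μ)
    (hF : ContDiff ℝ 2 F)
    (hell : ∀ Z Y : EuclideanSpace ℝ (Fin N × Fin 2),
      lam * (1 + ‖Z‖) ^ (-μ) * ‖Y‖ ^ 2 ≤ iteratedFDeriv ℝ 2 F Z ![Y, Y])
    (θ : ℝ → ℝ) (hθ : ∀ r : ℝ, 0 ≤ r → θ r = lam / (μ - 1) * (1 - (1 + r) ^ (1 - μ))) :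
    ∀ ε : ℝ, 0 < ε → ∀ Z : EuclideanSpace ℝ (Fin N × Fin 2),
      ‖Z‖ ≤ ε + (θ ε)⁻¹ * ⟪gradient F Z - gradient F 0, Z⟫ := by
  intro ε hε Z
  have hdF : ∀ t : ℝ, HasDerivAt (fun t : ℝ => fderiv ℝ F (t • Z) Z)
      (iteratedFDeriv ℝ 2 F (t • Z) ![Z, Z]) t := by
    exact fun t => statement4_aux F hF Z t
  have hμ1 : 0 < μ - 1 := by linarith
  have hdh : ∀ t : ℝ, 0 ≤ t → HasDerivAt
      (fun t : ℝ => -(lam / (μ - 1)) * ‖Z‖ * (1 + t * ‖Z‖) ^ (1 - μ))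
      (lam * (1 + t * ‖Z‖) ^ (-μ) * ‖Z‖ ^ 2) t := by
    intro t ht
    have hpos : 0 < 1 + t * ‖Z‖ := by positivity
    have h1 : HasDerivAt (fun t : ℝ => 1 + t * ‖Z‖) ‖Z‖ t := by
      simpa using ((hasDerivAt_id t).mul_const ‖Z‖).const_add 1
    have h2 := (h1.rpow_const (p := 1 - μ) (Or.inl hpos.ne')).const_mul
      (-(lam / (μ - 1)) * ‖Z‖)
    refine h2.congr_deriv ?_
    rw [show 1 - μ - 1 = -μ by ring]
    field_simp
    ring
  have hmono : MonotoneOn (fun t : ℝ => fderiv ℝ F (t • Z) Z -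
      (-(lam / (μ - 1)) * ‖Z‖ * (1 + t * ‖Z‖) ^ (1 - μ))) (Set.Icc 0 1) := by
    apply monotoneOn_of_hasDerivWithinAt_nonneg (convex_Icc 0 1)
      (f' := fun t => iteratedFDeriv ℝ 2 F (t • Z) ![Z, Z] -
        lam * (1 + t * ‖Z‖) ^ (-μ) * ‖Z‖ ^ 2)
    · intro t ht
      exact ((hdF t).sub (hdh t ht.1)).continuousAt.continuousWithinAt
    · intro t ht
      have ht' := interior_subset ht
      exact ((hdF t).sub (hdh t ht'.1)).hasDerivWithinAt
    · intro t ht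
      have ht' := interior_subset ht
      have := hell (t • Z) Z
      rw [norm_smul, Real.norm_of_nonneg ht'.1] at this
      linarith
  have h01 := hmono (Set.left_mem_Icc.2 zero_le_one) (Set.right_mem_Icc.2 zero_le_one) zero_le_one
  have hin : ⟪gradient F Z - gradient F 0, Z⟫ = fderiv ℝ F Z Z - fderiv ℝ F 0 Z := by
    rw [inner_sub_left]
    simp [gradient]
  have hkey : ‖Z‖ * θ ‖Z‖ ≤ ⟪gradient F Z - gradient F 0, Z⟫ := by
    rw [hin, hθ _ (norm_nonneg Z)]
    simp only [zero_smul, one_smul, zero_mul, one_mul, add_zero, Real.one_rpow] at h01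
    linarith
  have hmonoθ : ∀ a b : ℝ, 0 ≤ a → a ≤ b → θ a ≤ θ b := by
    intro a b ha hab
    rw [hθ a ha, hθ b (ha.trans hab)]
    have := Real.rpow_le_rpow_of_nonpos (z := 1 - μ) (by linarith : 0 < 1 + a)
      (by linarith : 1 + a ≤ 1 + b) (by linarith)
    gcongr
  have hθ0 : θ 0 = 0 := by simp [hθ 0 le_rfl]
  have hθε : 0 < θ ε := by
    rw [hθ ε hε.le]
    have := Real.rpow_lt_one_of_one_lt_of_neg (by linarith : 1 < 1 + ε) (by linarith : 1 - μ < 0)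
    have h2 : 0 < 1 - (1 + ε) ^ (1 - μ) := by linarith
    positivity
  rcases le_total ‖Z‖ ε with h | h
  · have h0 : 0 ≤ θ ‖Z‖ := hθ0 ▸ hmonoθ 0 _ le_rfl (norm_nonneg Z)
    have h1 : 0 ≤ ⟪gradient F Z - gradient F 0, Z⟫ :=
      (mul_nonneg (norm_nonneg Z) h0).trans hkey
    have h2 := mul_nonneg (inv_nonneg.2 hθε.le) h1
    linarith
  · have h1 : ‖Z‖ * θ ε ≤ ⟪gradient F Z - gradient F 0, Z⟫ :=
      (mul_le_mul_of_nonneg_left (hmonoθ ε _ hε.le h) (norm_nonneg Z)).trans hkey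
    have h2 : ‖Z‖ ≤ (θ ε)⁻¹ * ⟪gradient F Z - gradient F 0, Z⟫ := by
      rw [inv_mul_eq_div, le_div_iff₀ hθε]
      exact h1
    linarith
end

section
/- Let F ∈ C²(ℝ^(2N)) satisfy the μ-ellipticity lower bound λ(1+|Z|)^(−μ)|Y|² ≤ D²F(Z)(Y,Y) for all Y, Z ∈ ℝ^(2N), with λ > 0 and μ > 1, and set θ(r) := (λ/(μ−1))[1 − (1+r)^(1−μ)] for r ≥ 0. Then for every Z ∈ ℝ^(2N) one has θ(|Z|)·|Z| ≤ (∇F(Z) − ∇F(0)) : Z. -/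
open scoped RealInnerProductSpace

/-- if `F ∈ C²(ℝ^{2N})` satisfies the `μ`-ellipticity lower bound and
`θ(r) = (λ/(μ−1))[1 − (1+r)^{1−μ}]`, then `θ(|Z|)|Z| ≤ (∇F(Z) − ∇F(0)) : Z` for all `Z`. -/
theorem statement5 {N : ℕ} (F : EuclideanSpace ℝ (Fin N × Fin 2) → ℝ)
    (lam μ : ℝ) (hlam : 0 < lam) (hμ : 1 < μ)
    (hF : ContDiff ℝ 2 F)
    (hell : ∀ Z Y : EuclideanSpace ℝ (Fin N × Fin 2),
      lam * (1 + ‖Z‖) ^ (-μ) * ‖Y‖ ^ 2 ≤ iteratedFDeriv ℝ 2 F Z ![Y, Y])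
    (θ : ℝ → ℝ) (hθ : ∀ r : ℝ, 0 ≤ r → θ r = lam / (μ - 1) * (1 - (1 + r) ^ (1 - μ))) :
    ∀ Z : EuclideanSpace ℝ (Fin N × Fin 2),
      θ ‖Z‖ * ‖Z‖ ≤ ⟪gradient F Z - gradient F 0, Z⟫ := by
  intro Z
  have hd : Differentiable ℝ (fderiv ℝ F) :=
    (hF.fderiv_right (m := 1) (by norm_num)).differentiable (by norm_num)
  have hμ' : μ - 1 ≠ 0 := by linarith
  have h1 : ∀ t : ℝ, HasDerivAt (fun t : ℝ => fderiv ℝ F (t • Z) Z)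
      (fderiv ℝ (fderiv ℝ F) (t • Z) Z Z) t := by
    intro t
    have ha : HasDerivAt (fun t : ℝ => t • Z) Z t := by
      simpa using (hasDerivAt_id t).smul_const Z
    have hb := (hd (t • Z)).hasFDerivAt.comp_hasDerivAt t ha
    simpa using hb.clm_apply (hasDerivAt_const t Z)
  have h2 : ∀ t : ℝ, 0 ≤ t → HasDerivAt
      (fun t : ℝ => lam / (μ - 1) * (1 - (1 + t * ‖Z‖) ^ (1 - μ)) * ‖Z‖)
      (lam * (1 + t * ‖Z‖) ^ (-μ) * ‖Z‖ ^ 2) t := by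
    intro t ht
    have hp : 0 < 1 + t * ‖Z‖ := by positivity
    have ha : HasDerivAt (fun t : ℝ => 1 + t * ‖Z‖) ‖Z‖ t := by
      simpa using ((hasDerivAt_id t).mul_const ‖Z‖).const_add 1
    have hb := ha.rpow_const (p := 1 - μ) (Or.inl hp.ne')
    have hc := (((hb.const_sub 1).const_mul (lam / (μ - 1))).mul_const ‖Z‖)
    refine hc.congr_deriv ?_
    rw [show (1 - μ - 1) = -μ by ring]
    field_simp
    ring
  have h3 := fun t ht => (h1 t).sub (h2 t ht)
  have hm := monotoneOn_of_deriv_nonneg (convex_Icc (0 : ℝ) 1)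
    (fun t ht => (h3 t ht.1).continuousAt.continuousWithinAt)
    (fun t ht => (h3 t (interior_subset ht).1).differentiableAt.differentiableWithinAt)
    (by
      intro t ht
      have ht0 := (interior_subset ht).1
      rw [(h3 t ht0).deriv]
      have h := hell (t • Z) Z
      rw [iteratedFDeriv_two_apply, norm_smul, Real.norm_of_nonneg ht0] at h
      simp at h
      linarith)
  have h := hm (Set.left_mem_Icc.2 zero_le_one) (Set.right_mem_Icc.2 zero_le_one) zero_le_one
  rw [hθ _ (norm_nonneg Z), inner_sub_left, inner_gradient_left, inner_gradient_left]
  simp at h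
  linarith
end

section
/- Fix μ > 1 and define F : ℝ^(2N) → ℝ by F(Z) := ∫₀^{|Z|} ∫₀^{s} (1+r)^(−μ) dr ds. Then F is of class C², there is a constant M > 0 with |∇F(Z)| ≤ M for all Z, and there are constants λ, Λ > 0 such that λ(1+|Z|)^(−μ)|Y|² ≤ D²F(Z)(Y,Y) ≤ Λ(1+|Z|)^(−1)|Y|² for all Y, Z ∈ ℝ^(2N). -/
open Filter Topology Set

noncomputable def JJ (E : Type*) [NormedAddCommGroup E] [InnerProductSpace ℝ E] :
    E →L[ℝ] E →L[ℝ] ℝ := innerSL ℝ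

section radial
variable {E : Type*} [NormedAddCommGroup E] [InnerProductSpace ℝ E]

theorem JJ_apply (x y : E) : JJ E x y = inner ℝ x y := rfl

theorem norm_JJ (x : E) : ‖JJ E x‖ = ‖x‖ := innerSL_apply_norm ℝ x

theorem hasFDerivAt_norm_JJ (Z : E) (hZ : Z ≠ 0) :
    HasFDerivAt (fun z : E => ‖z‖) (‖Z‖⁻¹ • JJ E Z) Z := by
  have h := (hasStrictFDerivAt_norm_sq Z).hasFDerivAt.sqrt (by positivity)
  simp only [Real.sqrt_sq (norm_nonneg _)] at h
  convert h using 1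
  ext y
  have hz : ‖Z‖ ≠ 0 := by simpa using hZ
  have e : (innerSL ℝ) Z y = inner ℝ Z y := rfl
  simp [JJ_apply, e]
  field_simp

theorem cont_add {X V : Type*} [TopologicalSpace X] [NormedAddCommGroup V] {f g : X → V}
    (hf : Continuous f) (hg : Continuous g) : Continuous (fun x => f x + g x) := hf.add hg

theorem sq_norm {X V : Type*} [NormedAddCommGroup V] {f : X → V} {a : X → ℝ} {l : Filter X}
    (h : ∀ x, ‖f x‖ ≤ a x) (ha : Tendsto a l (𝓝 0)) : Tendsto f l (𝓝 0) :=
  squeeze_zero_norm h ha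

theorem nsm {V : Type*} [NormedAddCommGroup V] [NormedSpace ℝ V] (a : ℝ) (v : V) :
    ‖a • v‖ ≤ ‖a‖ * ‖v‖ := (norm_smul a v).le

/-- The candidate Hessian. -/
noncomputable def hess (h p : ℝ → ℝ) (Z : E) : E →L[ℝ] E →L[ℝ] ℝ :=
  h ‖Z‖ • JJ E + (p ‖Z‖ - h ‖Z‖) •
    (JJ E (‖Z‖⁻¹ • Z)).smulRight (JJ E (‖Z‖⁻¹ • Z))

theorem hasFDerivAt_radial (f g : ℝ → ℝ) (hf : ∀ s, 0 ≤ s → HasDerivAt f (g s) s)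
    (g0 : g 0 = 0) (Z : E) :
    HasFDerivAt (fun z : E => f ‖z‖) (dslope g 0 ‖Z‖ • JJ E Z) Z := by
  by_cases hZ : Z = 0
  · subst hZ
    have h := (hf 0 le_rfl)
    rw [g0] at h
    rw [hasDerivAt_iff_isLittleO] at h
    rw [hasFDerivAt_iff_isLittleO]
    have ht : Tendsto (fun z : E => ‖z‖) (𝓝 0) (𝓝 0) := by
      simpa using (continuous_norm (E := E)).tendsto 0
    have h2 := (h.comp_tendsto ht)
    have h3 := h2.norm_right
    refine Asymptotics.IsLittleO.of_norm_right ?_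
    simpa [Function.comp_def] using h3
  · have hz : ‖Z‖ ≠ 0 := by simpa using hZ
    have h := (hf ‖Z‖ (norm_nonneg _)).comp_hasFDerivAt Z (hasFDerivAt_norm_JJ Z hZ)
    refine h.congr_fderiv ?_
    ext y
    simp only [dslope_of_ne _ hz, slope_def_field, g0, smul_apply, smul_eq_mul]
    rw [sub_zero, sub_zero]
    ring

theorem hasFDerivAt_grad (g p : ℝ → ℝ) (hg : ∀ s, 0 ≤ s → HasDerivAt g (p s) s)
    (g0 : g 0 = 0) (Z : E) :
    HasFDerivAt (fun z : E => dslope g 0 ‖z‖ • JJ E z) (hess (dslope g 0) p Z) Z := by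
  by_cases hZ : Z = 0
  · subst hZ
    have hc : ContinuousAt (dslope g 0) 0 :=
      continuousAt_dslope_same.2 (hg 0 le_rfl).differentiableAt
    have ht : Tendsto (fun z : E => ‖z‖) (𝓝 0) (𝓝 0) := by
      simpa using (continuous_norm (E := E)).tendsto 0
    have h1 : Tendsto (fun z : E => dslope g 0 ‖z‖ - dslope g 0 0) (𝓝 0) (𝓝 0) := by
      have := (hc.tendsto.comp ht).sub_const (dslope g 0 0)
      simpa using this
    rw [hasFDerivAt_iff_isLittleO]
    have h2 : (fun z : E => (dslope g 0 ‖z‖ - dslope g 0 0) • JJ E z)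
        =o[𝓝 0] (fun z : E => (1 : ℝ) • z) := by
      have hb : (fun z : E => JJ E z) =O[𝓝 0] (fun z : E => z) := (JJ E).isBigO_id _
      have hl : (fun z : E => dslope g 0 ‖z‖ - dslope g 0 0) =o[𝓝 0] (fun _ : E => (1 : ℝ)) :=
        (Asymptotics.isLittleO_one_iff ℝ).2 h1
      exact hl.smul_isBigO hb
    refine h2.congr ?_ ?_
    · intro z
      ext y
      simp [hess]
      ring
    · intro z; simp
  · have hz : ‖Z‖ ≠ 0 := by simpa using hZ
    have hd : HasDerivAt (dslope g 0) ((p ‖Z‖ * ‖Z‖ - g ‖Z‖) / ‖Z‖ ^ 2) ‖Z‖ := by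
      have h := (hg ‖Z‖ (norm_nonneg _)).div (hasDerivAt_id ‖Z‖) hz
      have e : dslope g 0 =ᶠ[𝓝 ‖Z‖] (g / id) := by
        filter_upwards [isOpen_ne.mem_nhds hz] with s hs
        rw [dslope_of_ne _ hs, slope_def_field, g0]
        simp
      simpa using h.congr_of_eventuallyEq e
    have h := (hd.comp_hasFDerivAt Z (hasFDerivAt_norm_JJ Z hZ)).smul (JJ E).hasFDerivAt
    refine h.congr_fderiv ?_
    ext x y
    simp only [hess, Function.comp_apply, dslope_of_ne _ hz, slope_def_field, g0,
      add_apply, smul_apply,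
      ContinuousLinearMap.smulRight_apply, map_smul, smul_eq_mul]
    field_simp
    ring

theorem continuous_hess (g p : ℝ → ℝ) (hg : ∀ s, 0 ≤ s → HasDerivAt g (p s) s)
    (hp : ∀ s, 0 ≤ s → ContinuousAt p s) :
    Continuous (fun Z : E => hess (dslope g 0) p Z) := by
  have hc : ∀ s, 0 ≤ s → ContinuousAt (dslope g 0) s := by
    intro s hs
    by_cases h : s = 0
    · subst h
      exact continuousAt_dslope_same.2 (hg 0 le_rfl).differentiableAt
    · exact (continuousAt_dslope_of_ne h).2 (hg s hs).continuousAt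
  have hcn : Continuous (fun Z : E => dslope g 0 ‖Z‖) := by
    rw [continuous_iff_continuousAt]
    intro Z
    exact ContinuousAt.comp (g := dslope g 0) (hc _ (norm_nonneg Z)) continuous_norm.continuousAt
  have hpn : Continuous (fun Z : E => p ‖Z‖) := by
    rw [continuous_iff_continuousAt]
    intro Z
    exact ContinuousAt.comp (g := p) (hp _ (norm_nonneg Z)) continuous_norm.continuousAt
  have k1 : Continuous (fun Z : E => dslope g 0 ‖Z‖ • JJ E) := hcn.smul continuous_const
  suffices k2 : Continuous (fun Z : E => (p ‖Z‖ - dslope g 0 ‖Z‖) •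
      (JJ E (‖Z‖⁻¹ • Z)).smulRight (JJ E (‖Z‖⁻¹ • Z))) from by
    have k3 := cont_add (V := E →L[ℝ] E →L[ℝ] ℝ) k1 k2
    exact k3
  rw [continuous_iff_continuousAt]
  intro Z
  by_cases hZ : Z = 0
  · subst hZ
    have h0 : Tendsto (fun Z : E => p ‖Z‖ - dslope g 0 ‖Z‖) (𝓝 0) (𝓝 0) := by
      have := (hpn.tendsto 0).sub (hcn.tendsto 0)
      simpa [(hg 0 le_rfl).deriv] using this
    unfold ContinuousAt
    simp only [norm_zero, smul_zero, map_zero, ContinuousLinearMap.smulRight_zero]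
    rw [show (p 0 - dslope g 0 0) • (0 : E →L[ℝ] E →L[ℝ] ℝ) = 0 by
      ext x y; simp]
    refine sq_norm (V := E →L[ℝ] E →L[ℝ] ℝ) (a := fun Z : E => ‖p ‖Z‖ - dslope g 0 ‖Z‖‖) ?_ (by simpa using h0.norm)
    intro Y
    refine (nsm (V := E →L[ℝ] E →L[ℝ] ℝ) _ _).trans ?_
    have e := ContinuousLinearMap.norm_smulRight_apply (JJ E (‖Y‖⁻¹ • Y)) (JJ E (‖Y‖⁻¹ • Y))
    refine (mul_le_mul_of_nonneg_left e.le (norm_nonneg _)).trans ?_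
    rw [norm_JJ, norm_smul, norm_inv,
      norm_norm]
    have h1 : ‖Y‖⁻¹ * ‖Y‖ ≤ 1 := inv_mul_le_one
    have h2 : 0 ≤ ‖Y‖⁻¹ * ‖Y‖ := by positivity
    exact mul_le_of_le_one_right (norm_nonneg _) (mul_le_one₀ h1 h2 h1)
  · have hz : ‖Z‖ ≠ 0 := by simpa using hZ
    have hu : ContinuousAt (fun Z : E => JJ E (‖Z‖⁻¹ • Z)) Z := by
      refine (JJ E).continuous.continuousAt.comp ?_
      exact (continuous_norm.continuousAt.inv₀ hz).smul continuousAt_id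
    refine (hpn.sub hcn).continuousAt.smul ?_
    have e : (fun Z : E => (JJ E (‖Z‖⁻¹ • Z)).smulRight (JJ E (‖Z‖⁻¹ • Z)))
      = fun Z : E => ContinuousLinearMap.smulRightL ℝ E (E →L[ℝ] ℝ) (JJ E (‖Z‖⁻¹ • Z))
          (JJ E (‖Z‖⁻¹ • Z)) := by
      rfl
    rw [e]
    exact ((ContinuousLinearMap.continuous _).continuousAt.comp hu).clm_apply hu

theorem hess_apply (h p : ℝ → ℝ) (Z Y : E) :
    ∃ q : ℝ, 0 ≤ q ∧ q ≤ ‖Y‖ ^ 2 ∧ hess h p Z Y Y = h ‖Z‖ * (‖Y‖ ^ 2 - q) + p ‖Z‖ * q := by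
  refine ⟨(inner ℝ (‖Z‖⁻¹ • Z) Y) ^ 2, sq_nonneg _, ?_, ?_⟩
  · rw [← sq_abs]
    have h1 := abs_real_inner_le_norm (‖Z‖⁻¹ • Z) Y
    rw [norm_smul, norm_inv, norm_norm] at h1
    have h2 : ‖Z‖⁻¹ * ‖Z‖ ≤ 1 := inv_mul_le_one
    have h3 : |inner ℝ (‖Z‖⁻¹ • Z) Y| ≤ ‖Y‖ :=
      h1.trans (mul_le_of_le_one_left (norm_nonneg _) h2)
    gcongr
  · simp only [hess, add_apply, smul_apply,
      ContinuousLinearMap.smulRight_apply, smul_eq_mul, JJ_apply, real_inner_self_eq_norm_sq]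
    ring

end radial

noncomputable def pp (μ s : ℝ) : ℝ := (1 + s) ^ (-μ)
noncomputable def gg (μ s : ℝ) : ℝ := (1 - (1 + s) ^ (1 - μ)) / (μ - 1)

theorem gg_zero (μ : ℝ) : gg μ 0 = 0 := by simp [gg]

theorem hasDerivAt_gg (μ : ℝ) (hμ : 1 < μ) (s : ℝ) (hs : -1 < s) :
    HasDerivAt (gg μ) (pp μ s) s := by
  have h1 : HasDerivAt (fun s : ℝ => 1 + s) 1 s := (hasDerivAt_id s).const_add 1
  have h := ((h1.rpow_const (p := 1 - μ) (Or.inl (by linarith))).const_sub 1).div_const (μ - 1)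
  have hm : μ - 1 ≠ 0 := by linarith
  refine h.congr_deriv ?_
  rw [pp, show 1 - μ - 1 = -μ by ring]
  field_simp
  ring

theorem continuousAt_pp (μ s : ℝ) (hs : -1 < s) : ContinuousAt (pp μ) s := by
  unfold pp
  exact (continuousAt_const.add continuousAt_id).rpow_const (Or.inl (by simp; linarith))

theorem inner_int (μ : ℝ) (hμ : 1 < μ) (s : ℝ) (hs : 0 ≤ s) :
    ∫ r in (0:ℝ)..s, (1 + r) ^ (-μ) = gg μ s := by
  have hsub : ∀ x ∈ uIcc 0 s, -1 < x := by
    intro x hx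
    rw [uIcc_of_le hs] at hx
    linarith [hx.1]
  have := intervalIntegral.integral_eq_sub_of_hasDerivAt (f := gg μ) (f' := pp μ) (a := 0) (b := s)
    (fun x hx => hasDerivAt_gg μ hμ x (hsub x hx))
    (ContinuousOn.intervalIntegrable fun x hx =>
      (continuousAt_pp μ x (hsub x hx)).continuousWithinAt)
  rw [gg_zero, sub_zero] at this
  exact this

theorem outer_deriv (μ : ℝ) (hμ : 1 < μ) (s : ℝ) (hs : 0 ≤ s) :
    HasDerivAt (fun t => ∫ x in (0:ℝ)..t, gg μ x) (gg μ s) s := by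
  have hc : ContinuousOn (gg μ) (Ioi (-1)) := fun x hx =>
    (hasDerivAt_gg μ hμ x hx).continuousAt.continuousWithinAt
  refine intervalIntegral.integral_hasDerivAt_right ?_ ?_ ?_
  · refine (hc.mono ?_).intervalIntegrable
    intro x hx
    rw [uIcc_of_le hs] at hx
    exact lt_of_lt_of_le (by norm_num) hx.1
  · exact hc.stronglyMeasurableAtFilter isOpen_Ioi s (lt_of_lt_of_le (by norm_num) hs)
  · exact (hasDerivAt_gg μ hμ s (by linarith)).continuousAt

theorem pp_anti (μ : ℝ) (hμ : 1 < μ) {a b : ℝ} (ha : 0 ≤ a) (hab : a ≤ b) : pp μ b ≤ pp μ a :=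
  Real.rpow_le_rpow_of_nonpos (by linarith) (by linarith) (by linarith)

/-- bounds on `h = dslope g 0` -/
theorem hh_bounds (μ : ℝ) (hμ : 1 < μ) (s : ℝ) (hs : 0 ≤ s) :
    pp μ s ≤ dslope (gg μ) 0 s ∧ dslope (gg μ) 0 s ≤ 1 ∧
      dslope (gg μ) 0 s * s ≤ 1 / (μ - 1) := by
  have hp0 : pp μ 0 = 1 := by simp [pp]
  rcases hs.eq_or_lt with h | h
  · subst h
    have : (0:ℝ) ≤ 1 / (μ - 1) := by
      have : 0 < μ - 1 := by linarith
      positivity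
    rw [dslope_same, (hasDerivAt_gg μ hμ 0 (by norm_num)).deriv, hp0]
    simpa using this
  · obtain ⟨c, hc, e⟩ := exists_hasDerivAt_eq_slope (gg μ) (pp μ) h
      (fun x hx => (hasDerivAt_gg μ hμ x (by linarith [hx.1])).continuousAt.continuousWithinAt)
      (fun x hx => hasDerivAt_gg μ hμ x (by linarith [hx.1]))
    have e2 : dslope (gg μ) 0 s = pp μ c := by
      rw [dslope_of_ne _ h.ne', slope_def_field, e]
    refine ⟨?_, ?_, ?_⟩
    · rw [e2]; exact pp_anti μ hμ hc.1.le hc.2.le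
    · rw [e2, ← hp0]; exact pp_anti μ hμ le_rfl hc.1.le
    · rw [dslope_of_ne _ h.ne', slope_def_field, gg_zero, sub_zero, sub_zero,
        div_mul_cancel₀ _ h.ne', gg]
      have : 0 < μ - 1 := by linarith
      have : 0 ≤ (1 + s) ^ (1 - μ) := by positivity
      gcongr
      linarith



/-- for `μ > 1`, the density
`F(Z) = ∫₀^{|Z|} ∫₀^s (1+r)^{−μ} dr ds` on `ℝ^{2N}` is `C²`, has bounded gradient and
is `μ`-elliptic: `λ(1+|Z|)^{−μ}|Y|² ≤ D²F(Z)(Y,Y) ≤ Λ(1+|Z|)^{−1}|Y|²`. -/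
theorem statement7 {N : ℕ} (μ : ℝ) (hμ : 1 < μ)
    (F : EuclideanSpace ℝ (Fin N × Fin 2) → ℝ)
    (hFdef : ∀ Z, F Z = ∫ s in (0:ℝ)..‖Z‖, ∫ r in (0:ℝ)..s, (1 + r) ^ (-μ)) :
    ContDiff ℝ 2 F ∧
    (∃ M : ℝ, 0 < M ∧ ∀ Z, ‖gradient F Z‖ ≤ M) ∧
    (∃ lam Lam : ℝ, 0 < lam ∧ 0 < Lam ∧
      ∀ Z Y : EuclideanSpace ℝ (Fin N × Fin 2),
        lam * (1 + ‖Z‖) ^ (-μ) * ‖Y‖ ^ 2 ≤ iteratedFDeriv ℝ 2 F Z ![Y, Y] ∧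
        iteratedFDeriv ℝ 2 F Z ![Y, Y] ≤ Lam * (1 + ‖Z‖)⁻¹ * ‖Y‖ ^ 2) := by
  have hF : F = fun Z => (fun t => ∫ x in (0:ℝ)..t, gg μ x) ‖Z‖ := by
    funext Z
    rw [hFdef]
    refine intervalIntegral.integral_congr ?_
    intro s hs
    rw [uIcc_of_le (norm_nonneg Z)] at hs
    exact inner_int μ hμ s hs.1
  have hg : ∀ s, 0 ≤ s → HasDerivAt (gg μ) (pp μ s) s := fun s hs =>
    hasDerivAt_gg μ hμ s (by linarith)
  have d1 : ∀ Z, HasFDerivAt F (dslope (gg μ) 0 ‖Z‖ • JJ _ Z) Z := by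
    intro Z
    rw [hF]
    exact hasFDerivAt_radial _ _ (outer_deriv μ hμ) (gg_zero μ) Z
  have d2 := hasFDerivAt_grad (E := EuclideanSpace ℝ (Fin N × Fin 2)) _ _ hg (gg_zero μ)
  have e1 : fderiv ℝ F = fun Z => dslope (gg μ) 0 ‖Z‖ • JJ _ Z := funext fun Z => (d1 Z).fderiv
  have e2 : fderiv ℝ (fderiv ℝ F) = fun Z => hess (dslope (gg μ) 0) (pp μ) Z := by
    rw [e1]
    exact funext fun Z => (d2 Z).fderiv
  have hm : 0 < μ - 1 := by linarith
  refine ⟨?_, ⟨1 / (μ - 1), by positivity, ?_⟩, ⟨1, 1 + 1 / (μ - 1), one_pos, by positivity, ?_⟩⟩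
  · rw [show (2 : WithTop ℕ∞) = 1 + 1 by norm_num, contDiff_succ_iff_fderiv]
    refine ⟨fun Z => (d1 Z).differentiableAt, by simp, ?_⟩
    rw [contDiff_one_iff_fderiv, e2]
    refine ⟨?_, continuous_hess _ _ hg fun s hs => continuousAt_pp μ s (by linarith)⟩
    rw [e1]
    exact fun Z => (d2 Z).differentiableAt
  · intro Z
    obtain ⟨b1, b2, b3⟩ := hh_bounds μ hμ ‖Z‖ (norm_nonneg Z)
    have hp : 0 ≤ pp μ ‖Z‖ := by unfold pp; positivity
    rw [gradient, LinearIsometryEquiv.norm_map, e1, norm_smul, norm_JJ, Real.norm_of_nonneg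
      (hp.trans b1)]
    exact b3
  · intro Z Y
    obtain ⟨b1, b2, b3⟩ := hh_bounds μ hμ ‖Z‖ (norm_nonneg Z)
    have hz := norm_nonneg Z
    have hp : 0 ≤ pp μ ‖Z‖ := by unfold pp; positivity
    obtain ⟨q, q0, q1, hq⟩ := hess_apply (dslope (gg μ) 0) (pp μ) Z Y
    rw [iteratedFDeriv_two_apply, e2]
    simp only [Matrix.cons_val_zero, Matrix.cons_val_one]
    rw [hq]
    change 1 * pp μ ‖Z‖ * ‖Y‖ ^ 2 ≤ _ ∧ _
    set h := dslope (gg μ) 0 ‖Z‖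
    set p := pp μ ‖Z‖
    refine ⟨by nlinarith, ?_⟩
    have b4 : h ≤ (1 + 1 / (μ - 1)) * (1 + ‖Z‖)⁻¹ := by
      rw [← div_eq_mul_inv, le_div_iff₀ (by linarith)]
      linarith
    have : h * (‖Y‖ ^ 2 - q) + p * q ≤ h * ‖Y‖ ^ 2 := by nlinarith
    exact this.trans (by gcongr)
end

section
/- Fix μ > 1 and define F : ℝ^(2N) → ℝ by F(Z) := ∫₀^{|Z|} ∫₀^{s} (1+r²)^(−μ/2) dr ds. Then F is of class C², there is a constant M > 0 with |∇F(Z)| ≤ M for all Z, and there are constants λ, Λ > 0 such that λ(1+|Z|)^(−μ)|Y|² ≤ D²F(Z)(Y,Y) ≤ Λ(1+|Z|)^(−1)|Y|² for all Y, Z ∈ ℝ^(2N). -/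
open Filter Topology

section radial
variable {E : Type*} [NormedAddCommGroup E] [InnerProductSpace ℝ E]

/-- inner product as a bilinear map. -/
noncomputable def ipL (E : Type*) [NormedAddCommGroup E] [InnerProductSpace ℝ E] :
    E →L[ℝ] E →L[ℝ] ℝ := innerSL ℝ

lemma ipL_apply (x y : E) : ipL E x y = inner ℝ x y := rfl

lemma ipL_norm (x : E) : ‖ipL E x‖ = ‖x‖ := innerSL_apply_norm (𝕜 := ℝ) x

/-- the quotient `g t / t`. -/
noncomputable def quo (f g : ℝ → ℝ) (t : ℝ) : ℝ := if t = 0 then f 0 else g t / t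

lemma quo_mul {f g : ℝ → ℝ} (g0 : g 0 = 0) (t : ℝ) : quo f g t * t = g t := by
  unfold quo
  split_ifs with h
  · simp [h, g0]
  · field_simp

lemma quo_cont {f g : ℝ → ℝ} (g0 : g 0 = 0) (hg : ∀ t, HasDerivAt g (f t) t) :
    Continuous (quo f g) := by
  have e : quo f g = dslope g 0 := by
    funext t
    by_cases h : t = 0
    · subst h; simp [quo, (hg 0).deriv]
    · simp [quo, h, dslope_of_ne, slope_def_field, g0]
  rw [e, ← continuousOn_univ, continuousOn_dslope univ_mem]
  exact ⟨fun t _ => (hg t).continuousAt.continuousWithinAt, (hg 0).differentiableAt⟩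

lemma quo_deriv {f g : ℝ → ℝ} (hg : ∀ t, HasDerivAt g (f t) t) {t : ℝ}
    (ht : t ≠ 0) : HasDerivAt (quo f g) ((f t - quo f g t) / t) t := by
  have h := (hg t).div (hasDerivAt_id t) ht
  have e : quo f g =ᶠ[𝓝 t] g / id := by
    filter_upwards [isOpen_ne.mem_nhds ht] with s hs
    simp [quo, show s ≠ 0 from hs]
  refine (h.congr_of_eventuallyEq e).congr_deriv ?_
  simp only [quo, ht, if_false, id]
  field_simp

lemma norm_deriv {Z : E} (hZ : Z ≠ 0) :
    HasFDerivAt (fun x : E => ‖x‖) (‖Z‖⁻¹ • ipL E Z) Z := by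
  have h := (hasStrictFDerivAt_norm_sq Z).hasFDerivAt.sqrt
    (by simpa using hZ)
  have hn : ‖Z‖ ≠ 0 := by simpa using hZ
  refine (h.congr_fderiv ?_).congr_of_eventuallyEq ?_
  · ext y
    simp [ipL_apply]
    field_simp
  · filter_upwards with x
    simp

lemma comp_norm_deriv {f g G : ℝ → ℝ} (g0 : g 0 = 0) (hG : ∀ t, HasDerivAt G (g t) t) (Z : E) :
    HasFDerivAt (fun Z : E => G ‖Z‖) (quo f g ‖Z‖ • ipL E Z) Z := by
  by_cases hZ : Z = 0
  · subst hZ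
    have h := (hG 0).isLittleO
    refine HasFDerivAt.of_isLittleO ?_
    have t : Tendsto (fun x : E => ‖x‖) (𝓝 0) (𝓝 0) := by
      simpa using (continuous_norm (E := E)).tendsto 0
    have := h.comp_tendsto t
    simp [g0, Function.comp_def] at this ⊢
    exact this.of_norm_right
  · refine ((hG _).comp_hasFDerivAt Z (norm_deriv hZ)).congr_fderiv ?_
    have hn : ‖Z‖ ≠ 0 := by simpa using hZ
    rw [smul_smul, quo, if_neg hn, div_eq_mul_inv]

/-- second derivative -/
noncomputable def D2 (f g : ℝ → ℝ) (Z : E) : E →L[ℝ] E →L[ℝ] ℝ :=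
  quo f g ‖Z‖ • ipL E + ((f ‖Z‖ - quo f g ‖Z‖) / ‖Z‖ ^ 2) • (ipL E Z).smulRight (ipL E Z)

lemma D2_deriv {f g : ℝ → ℝ} (g0 : g 0 = 0) (hg : ∀ t, HasDerivAt g (f t) t) (Z : E) :
    HasFDerivAt (fun Z : E => quo f g ‖Z‖ • ipL E Z) (D2 f g Z) Z := by
  by_cases hZ : Z = 0
  · subst hZ
    refine HasFDerivAt.of_isLittleO ?_
    have t : Tendsto (fun x : E => quo f g ‖x‖ - quo f g 0) (𝓝 0) (𝓝 0) := by
      have : Continuous (fun x : E => quo f g ‖x‖ - quo f g 0) :=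
        ((quo_cont g0 hg).comp continuous_norm).sub continuous_const
      simpa using this.tendsto 0
    have h1 := (Asymptotics.isLittleO_one_iff ℝ).2 t
    have h2 : (fun x : E => ipL E x) =O[𝓝 0] (fun x : E => x) := (ipL E).isBigO_id _
    have h3 := h1.smul_isBigO h2
    simpa [D2, sub_smul] using h3
  · have hn : ‖Z‖ ≠ 0 := by simpa using hZ
    have h := ((quo_deriv hg hn).comp_hasFDerivAt Z (norm_deriv hZ)).smul (ipL E).hasFDerivAt
    refine h.congr_fderiv ?_
    ext y w
    simp [D2, ipL_apply]
    field_simp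

set_option maxSynthPendingDepth 5 in
lemma D2_cont {f g : ℝ → ℝ} (hf : Continuous f) (g0 : g 0 = 0)
    (hg : ∀ t, HasDerivAt g (f t) t) : Continuous (fun Z : E => D2 f g Z) := by
  have hq : Continuous (fun Z : E => quo f g ‖Z‖) := (quo_cont g0 hg).comp continuous_norm
  have hf' : Continuous (fun Z : E => f ‖Z‖) := hf.comp continuous_norm
  unfold D2
  have hA : Continuous (fun Z : E => quo f g ‖Z‖ • ipL E) := hq.smul continuous_const
  suffices hB : Continuous (fun Z : E => ((f ‖Z‖ - quo f g ‖Z‖) / ‖Z‖ ^ 2) •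
      (ipL E Z).smulRight (ipL E Z)) from hA.add hB
  rw [continuous_iff_continuousAt]
  intro Z
  by_cases hZ : Z = 0
  · subst hZ
    have t : Tendsto (fun Z : E => f ‖Z‖ - quo f g ‖Z‖) (𝓝 0) (𝓝 0) := by
      have : Continuous (fun Z : E => f ‖Z‖ - quo f g ‖Z‖) := hf'.sub hq
      have := this.tendsto 0
      simpa [quo] using this
    unfold ContinuousAt
    simp only [map_zero, ContinuousLinearMap.smulRight_zero, smul_zero]
    refine squeeze_zero_norm ?_ (by simpa using t.norm)
    intro Z
    rw [norm_smul, ContinuousLinearMap.norm_smulRight_apply, ipL_norm, norm_div]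
    by_cases hZ : Z = 0
    · subst hZ; simp
    · have hn : ‖Z‖ ≠ 0 := by simpa using hZ
      simp only [norm_pow, norm_norm]
      apply le_of_eq; field_simp; exact Real.norm_eq_abs _
  · have hn : ‖Z‖ ^ 2 ≠ 0 := by simpa using hZ
    refine ContinuousAt.smul ((hf'.sub hq).continuousAt.div
      (continuous_norm.pow 2).continuousAt hn) ?_
    have : Continuous (fun Z : E => ContinuousLinearMap.smulRightL ℝ E (E →L[ℝ] ℝ) (ipL E Z) (ipL E Z)) := by
      fun_prop
    exact this.continuousAt

lemma D2_bounds {f g : ℝ → ℝ} (Z Y : E) (h : f ‖Z‖ ≤ quo f g ‖Z‖) :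
    f ‖Z‖ * ‖Y‖ ^ 2 ≤ D2 f g Z Y Y ∧ D2 f g Z Y Y ≤ quo f g ‖Z‖ * ‖Y‖ ^ 2 := by
  have e : D2 f g Z Y Y = quo f g ‖Z‖ * ‖Y‖ ^ 2
      - (quo f g ‖Z‖ - f ‖Z‖) * (inner ℝ Z Y ^ 2 / ‖Z‖ ^ 2) := by
    simp [D2, ipL_apply]
    ring
  have h1 : 0 ≤ inner ℝ Z Y ^ 2 / ‖Z‖ ^ 2 := by positivity
  have h2 : inner ℝ Z Y ^ 2 / ‖Z‖ ^ 2 ≤ ‖Y‖ ^ 2 := by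
    refine div_le_of_le_mul₀ (by positivity) (by positivity) ?_
    have := abs_real_inner_le_norm Z Y
    rw [← mul_pow, mul_comm ‖Y‖]
    exact sq_le_sq.2 (by rwa [abs_of_nonneg (a := ‖Z‖ * ‖Y‖) (by positivity)])
  rw [e]
  constructor <;> nlinarith [sub_nonneg.2 h]

end radial

/-- for `μ > 1`, the density
`F(Z) = ∫₀^{|Z|} ∫₀^s (1+r²)^{−μ/2} dr ds` on `ℝ^{2N}` is `C²`, has bounded gradient and
is `μ`-elliptic: `λ(1+|Z|)^{−μ}|Y|² ≤ D²F(Z)(Y,Y) ≤ Λ(1+|Z|)^{−1}|Y|²`. -/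
theorem statement8 {N : ℕ} (μ : ℝ) (hμ : 1 < μ)
    (F : EuclideanSpace ℝ (Fin N × Fin 2) → ℝ)
    (hFdef : ∀ Z, F Z = ∫ s in (0:ℝ)..‖Z‖, ∫ r in (0:ℝ)..s, (1 + r ^ 2) ^ (-μ / 2)) :
    ContDiff ℝ 2 F ∧
    (∃ M : ℝ, 0 < M ∧ ∀ Z, ‖gradient F Z‖ ≤ M) ∧
    (∃ lam Lam : ℝ, 0 < lam ∧ 0 < Lam ∧
      ∀ Z Y : EuclideanSpace ℝ (Fin N × Fin 2),
        lam * (1 + ‖Z‖) ^ (-μ) * ‖Y‖ ^ 2 ≤ iteratedFDeriv ℝ 2 F Z ![Y, Y] ∧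
        iteratedFDeriv ℝ 2 F Z ![Y, Y] ≤ Lam * (1 + ‖Z‖)⁻¹ * ‖Y‖ ^ 2) := by
  obtain ⟨f, hfdef⟩ : ∃ f : ℝ → ℝ, f = fun r => (1 + r ^ 2) ^ (-μ / 2) := ⟨_, rfl⟩
  obtain ⟨g, hgdef⟩ : ∃ g : ℝ → ℝ, g = fun s => ∫ r in (0:ℝ)..s, f r := ⟨_, rfl⟩
  obtain ⟨G, hGdef⟩ : ∃ G : ℝ → ℝ, G = fun t => ∫ s in (0:ℝ)..t, g s := ⟨_, rfl⟩
  have hf : Continuous f := by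
    rw [hfdef]
    exact Continuous.rpow_const (by fun_prop) (fun x => Or.inl (by positivity))
  have hg : ∀ t, HasDerivAt g (f t) t := fun t => by
    rw [hgdef]; exact (hf.integral_hasStrictDerivAt 0 t).hasDerivAt
  have hgc : Continuous g := continuous_iff_continuousAt.2 fun t => (hg t).continuousAt
  have hG : ∀ t, HasDerivAt G (g t) t := fun t => by
    rw [hGdef]; exact (hgc.integral_hasStrictDerivAt 0 t).hasDerivAt
  have g0 : g 0 = 0 := by simp [hgdef]
  have hFG : F = fun Z => G ‖Z‖ := by
    funext Z; rw [hFdef, hGdef, hgdef, hfdef]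
  have fpos : ∀ r, 0 < f r := fun r => by rw [hfdef]; positivity
  have fone : ∀ r, f r ≤ 1 := fun r => by
    rw [hfdef]
    exact Real.rpow_le_one_of_one_le_of_nonpos (by nlinarith [sq_nonneg r]) (by linarith)
  have fanti : ∀ r t, 0 ≤ r → r ≤ t → f t ≤ f r := fun r t h0 h => by
    rw [hfdef]
    exact Real.rpow_le_rpow_of_nonpos (by positivity) (by gcongr) (by linarith)
  have fint : MeasureTheory.Integrable f := by
    have := integrable_rpow_neg_one_add_norm_sq (E := ℝ) (μ := MeasureTheory.volume) (r := μ)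
      (by simpa using hμ)
    simpa [hfdef] using this
  obtain ⟨C, hCdef⟩ : ∃ C : ℝ, C = ∫ r, f r := ⟨_, rfl⟩
  have C0 : 0 ≤ C := by rw [hCdef]; exact MeasureTheory.integral_nonneg fun r => (fpos r).le
  have gC : ∀ t, 0 ≤ t → g t ≤ C := fun t ht => by
    rw [hgdef, hCdef]
    simp only [intervalIntegral.integral_of_le ht]
    exact MeasureTheory.setIntegral_le_integral fint (Eventually.of_forall fun r => (fpos r).le)
  have gnn : ∀ t, 0 ≤ t → 0 ≤ g t := fun t ht => by
    rw [hgdef]; exact intervalIntegral.integral_nonneg ht fun r _ => (fpos r).le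
  have gt : ∀ t, 0 ≤ t → g t ≤ t := fun t ht => by
    have := intervalIntegral.integral_mono_on ht (hf.intervalIntegrable 0 t)
      (continuous_const.intervalIntegrable (μ := MeasureTheory.volume) 0 t) (fun x _ => fone x)
    simpa [hgdef] using this
  have gf : ∀ t, 0 ≤ t → t * f t ≤ g t := fun t ht => by
    have := intervalIntegral.integral_mono_on ht
      (continuous_const.intervalIntegrable (μ := MeasureTheory.volume) 0 t)
      (hf.intervalIntegrable 0 t) (fun x hx => fanti x t hx.1 hx.2)
    simpa [hgdef] using this
  have qf : ∀ t, 0 ≤ t → f t ≤ quo f g t := fun t ht => by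
    unfold quo
    split_ifs with h
    · rw [h]
    · rw [le_div_iff₀ (lt_of_le_of_ne ht (Ne.symm h)), mul_comm]
      exact gf t ht
  have q1 : ∀ t, 0 ≤ t → quo f g t ≤ 1 := fun t ht => by
    unfold quo
    split_ifs with h
    · exact fone 0
    · exact div_le_one_of_le₀ (gt t ht) ht
  have hd1 : ∀ Z, HasFDerivAt F (quo f g ‖Z‖ • ipL _ Z) Z := fun Z => by
    rw [hFG]; exact comp_norm_deriv g0 hG Z
  have hd1' : fderiv ℝ F = fun Z => quo f g ‖Z‖ • ipL _ Z := funext fun Z => (hd1 Z).fderiv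
  have hd2 := D2_deriv (E := EuclideanSpace ℝ (Fin N × Fin 2)) g0 hg
  refine ⟨?_, ⟨C + 1, by linarith, fun Z => ?_⟩, 1, 1 + C, one_pos, by linarith, fun Z Y => ?_⟩
  · have := (contDiff_succ_iff_fderiv (𝕜 := ℝ) (f := F) (n := 1)).2
      ⟨fun Z => (hd1 Z).differentiableAt, by simp, ?_⟩
    · rwa [one_add_one_eq_two] at this
    · rw [hd1', contDiff_one_iff_fderiv]
      refine ⟨fun Z => (hd2 Z).differentiableAt, ?_⟩
      rw [show fderiv ℝ _ = _ from funext fun Z => (hd2 Z).fderiv]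
      exact D2_cont hf g0 hg
  · unfold gradient
    rw [LinearIsometryEquiv.norm_map, hd1', norm_smul, ipL_norm, Real.norm_eq_abs,
      abs_of_nonneg ((fpos _).le.trans (qf _ (norm_nonneg _))), quo_mul g0]
    linarith [gC _ (norm_nonneg Z)]
  · rw [iteratedFDeriv_two_apply, hd1', (hd2 Z).fderiv]
    simp only [Matrix.cons_val_zero, Matrix.cons_val_one]
    have hn := norm_nonneg Z
    obtain ⟨h1, h2⟩ := D2_bounds (f := f) (g := g) Z Y (qf _ hn)
    constructor
    · refine le_trans ?_ h1
      gcongr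
      rw [one_mul, hfdef]
      have : (1 + ‖Z‖) ^ (-μ) = ((1 + ‖Z‖) ^ 2) ^ (-μ / 2) := by
        rw [← Real.rpow_natCast, ← Real.rpow_mul (by positivity)]
        congr 1; push_cast; ring
      rw [this]
      exact Real.rpow_le_rpow_of_nonpos (by positivity) (by nlinarith) (by linarith)
    · refine h2.trans ?_
      gcongr
      rw [← div_eq_mul_inv, le_div_iff₀ (by positivity), mul_add, quo_mul g0, mul_one]
      linarith [q1 _ hn, gC _ hn]
end

section
/- Let g ∈ C²([0,∞)) satisfy g'(0) = 0, g''(t) > 0 for t > 0, and the linear growth bounds a₁t − a₂ ≤ g(t) ≤ a₃t + a₄ for all t ≥ 0 (with a₁, a₃ > 0, a₂, a₄ ≥ 0). Define f(t) := g(√t) and λ(t) := 2f''(t)/f'(t) for t > 0. Then the Nitsche integral is finite: ∫₁^∞ [(1 + tλ(t))/(2 + tλ(t))] · (1/t) dt < ∞. -/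
open MeasureTheory

/-- failure of the Nitsche criterion for linear growth densities.
With `f(t) = g(√t)` and `λ(t) = 2f''(t)/f'(t)`, the Nitsche integral
`∫₁^∞ [(1 + tλ(t))/(2 + tλ(t))]·(1/t) dt` is finite. -/
theorem statement19 (g : ℝ → ℝ) (hg : ContDiff ℝ 2 g)
    (a₁ a₂ a₃ a₄ : ℝ) (ha₁ : 0 < a₁) (ha₂ : 0 ≤ a₂) (ha₃ : 0 < a₃) (ha₄ : 0 ≤ a₄)
    (hg'0 : deriv g 0 = 0)
    (hg'' : ∀ t : ℝ, 0 < t → 0 < deriv (deriv g) t)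
    (hgrow : ∀ t : ℝ, 0 ≤ t → a₁ * t - a₂ ≤ g t ∧ g t ≤ a₃ * t + a₄)
    (f lam : ℝ → ℝ)
    (hf : ∀ t : ℝ, f t = g (Real.sqrt t))
    (hlam : ∀ t : ℝ, 0 < t → lam t = 2 * deriv (deriv f) t / deriv f t) :
    IntegrableOn (fun t : ℝ => (1 + t * lam t) / (2 + t * lam t) * (1 / t))
      (Set.Ici 1) volume := by
  have hd1 : ContDiff ℝ 1 (deriv g) := by
    have : ContDiff ℝ (1 + 1) g := by simpa [one_add_one_eq_two] using hg
    exact (contDiff_succ_iff_deriv.1 this).2.2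
  have hgd : Differentiable ℝ g := hg.differentiable (by norm_num)
  have hgd' : Differentiable ℝ (deriv g) := hd1.differentiable (by norm_num)
  have hsm : StrictMonoOn (deriv g) (Set.Ici 0) := by
    apply strictMonoOn_of_deriv_pos (convex_Ici 0) hgd'.continuous.continuousOn
    intro x hx
    rw [interior_Ici] at hx
    exact hg'' x hx
  have hpos : ∀ s : ℝ, 0 < s → 0 < deriv g s := by
    intro s hs
    have := hsm (Set.mem_Ici.2 le_rfl) (Set.mem_Ici.2 hs.le) hs
    rwa [hg'0] at this
  have hbd : ∀ s : ℝ, 0 ≤ s → deriv g s ≤ a₃ := by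
    intro s hs
    by_contra! hlt
    have key : ∀ t : ℝ, s ≤ t → deriv g s * (t - s) ≤ g t - g s := by
      intro t ht
      refine (convex_Icc s t).mul_sub_le_image_sub_of_le_deriv hgd.continuous.continuousOn
        hgd.differentiableOn ?_ s (Set.left_mem_Icc.2 ht) t (Set.right_mem_Icc.2 ht) ht
      intro x hx
      rw [interior_Icc] at hx
      exact (hsm (Set.mem_Ici.2 hs) (Set.mem_Ici.2 (hs.trans hx.1.le)) hx.1).le
    have he : 0 < deriv g s - a₃ := sub_pos.2 hlt
    set e := deriv g s - a₃ with hedef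
    set C := a₄ - g s + deriv g s * s with hC
    have h1 : s ≤ s + (|C| + 1) / e := by
      have : 0 < (|C| + 1) / e := by positivity
      linarith
    have h2 := key _ h1
    have h3 := (hgrow _ (hs.trans h1)).2
    have h4 : e * (s + (|C| + 1) / e) = e * s + (|C| + 1) := by
      field_simp
    have h5 := le_abs_self C
    have h6 : 0 ≤ e * s := mul_nonneg he.le hs
    nlinarith
  have hf1 : ∀ t : ℝ, 0 < t → HasDerivAt f (deriv g (√t) * (1 / (2 * √t))) t := by
    intro t ht
    have hfe : f = fun t => g (√t) := funext hf
    rw [hfe]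
    exact (hgd (√t)).hasDerivAt.comp t (Real.hasDerivAt_sqrt ht.ne')
  have hh : ∀ t : ℝ, 0 < t →
      HasDerivAt (fun t => deriv g (√t)) (deriv (deriv g) (√t) * (1 / (2 * √t))) t := by
    intro t ht
    exact (hgd' (√t)).hasDerivAt.comp t (Real.hasDerivAt_sqrt ht.ne')
  have hf2 : ∀ t : ℝ, 0 < t → deriv (deriv f) t =
      deriv (deriv g) (√t) / (4 * √t ^ 2) - deriv g (√t) / (4 * √t ^ 3) := by
    intro t ht
    have hs : 0 < √t := Real.sqrt_pos.2 ht
    have hev : deriv f =ᶠ[nhds t] fun t => deriv g (√t) / (2 * √t) := by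
      filter_upwards [lt_mem_nhds ht] with x hx
      rw [(hf1 x hx).deriv]
      ring
    rw [hev.deriv_eq]
    have := (hh t ht).div ((Real.hasDerivAt_sqrt ht.ne').const_mul 2) (by positivity)
    have h2 := this.deriv
    refine Eq.trans h2 ?_
    field_simp
    try ring
  have hform : ∀ t : ℝ, 0 < t → (1 + t * lam t) / (2 + t * lam t) * (1 / t) =
      deriv (deriv g) (√t) / (deriv g (√t) + √t * deriv (deriv g) (√t)) / √t := by
    intro t ht
    have hs : 0 < √t := Real.sqrt_pos.2 ht
    have hp := hpos _ hs
    have hq := hg'' _ hs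
    have htl : t * lam t = √t * deriv (deriv g) (√t) / deriv g (√t) - 1 := by
      rw [hlam t ht, hf2 t ht, (hf1 t ht).deriv]
      have hts : t = √t ^ 2 := (Real.sq_sqrt ht.le).symm
      generalize √t = s at *
      subst hts
      field_simp
      try ring
    rw [htl]
    have hts : t = √t ^ 2 := (Real.sq_sqrt ht.le).symm
    generalize √t = s at *
    subst hts
    generalize deriv (deriv g) s = q at *
    generalize deriv g s = p at *
    have e1 : 1 + (s * q / p - 1) = s * q / p := by ring
    have e2 : 2 + (s * q / p - 1) = (p + s * q) / p := by field_simp; ring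
    have e3 : p + s * q ≠ 0 := by positivity
    rw [e1, e2]
    field_simp
  have hmono : Monotone (fun t => deriv g (√t)) := by
    intro x y hxy
    exact hsm.monotoneOn (Set.mem_Ici.2 (Real.sqrt_nonneg _)) (Set.mem_Ici.2 (Real.sqrt_nonneg _))
      (Real.sqrt_le_sqrt hxy)
  have htend := tendsto_atTop_ciSup hmono
    ⟨a₃, by rintro _ ⟨x, rfl⟩; exact hbd _ (Real.sqrt_nonneg _)⟩
  have hint : IntegrableOn (fun t => deriv (deriv g) (√t) * (1 / (2 * √t))) (Set.Ioi 1) volume := by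
    refine integrableOn_Ioi_deriv_of_nonneg
      (hgd'.continuous.comp Real.continuous_sqrt).continuousWithinAt
      (fun x hx => hh x (zero_lt_one.trans hx)) (fun x hx => ?_) htend
    have hs : 0 < √x := Real.sqrt_pos.2 (zero_lt_one.trans hx)
    have := hg'' _ hs
    positivity
  rw [integrableOn_Ici_iff_integrableOn_Ioi]
  have hφ : IntegrableOn (fun t : ℝ =>
      deriv (deriv g) (√t) / (deriv g (√t) + √t * deriv (deriv g) (√t)) / √t)
      (Set.Ioi 1) volume := by
    refine Integrable.mono' (hint.const_mul (2 / deriv g 1)) ?_ ?_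
    · apply Measurable.aestronglyMeasurable
      have m1 : Measurable (fun t : ℝ => deriv g (√t)) :=
        (measurable_deriv g).comp Real.continuous_sqrt.measurable
      have m2 : Measurable (fun t : ℝ => deriv (deriv g) (√t)) :=
        (measurable_deriv (deriv g)).comp Real.continuous_sqrt.measurable
      have m3 : Measurable (fun t : ℝ => √t) := Real.continuous_sqrt.measurable
      exact (m2.div (m1.add (m3.mul m2))).div m3
    · filter_upwards [ae_restrict_mem measurableSet_Ioi] with t ht
      have ht1 : (1 : ℝ) < t := ht
      have hs : 0 < √t := Real.sqrt_pos.2 (zero_lt_one.trans ht1)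
      have hp := hpos _ hs
      have hq := hg'' _ hs
      have h1 := hpos 1 one_pos
      have hle : deriv g 1 ≤ deriv g (√t) := by
        have := hmono ht1.le
        simpa using this
      rw [Real.norm_of_nonneg (by positivity)]
      have e : 2 / deriv g 1 * (deriv (deriv g) (√t) * (1 / (2 * √t))) =
          deriv (deriv g) (√t) / deriv g 1 / √t := by
        field_simp
      rw [e]
      have : deriv g 1 ≤ deriv g (√t) + √t * deriv (deriv g) (√t) := by
        have := mul_pos hs hq
        linarith
      gcongr
  exact hφ.congr_fun (fun t ht => (hform t (zero_lt_one.trans ht)).symm) measurableSet_Ioi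
end
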